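/- For every n ∈ ℕ and every ε > 0 there exists δ = δ(n, ε) > 0 such that for every von Neumann algebra M, every Hilbert M-bimodule H, and all almost δ-related n-tuples (ξ_1,…,ξ_n), (η_1,…,η_n) of unit vectors in H, there exists a unitary u ∈ M such that ‖u ξ_k − η_k u‖ < ε for all 1 ≤ k ≤ n. -/

import Mathlib

noncomputable section

/-- A von Neumann algebra is closed under the complex scalar action. -/
instance VonNeumannAlgebra.instSMulMemClass {H : Type*} [NormedAddCommGroup H]
    [InnerProductSpace ℂ H] [CompleteSpace H] :
    SMulMemClass (VonNeumannAlgebra H) ℂ (H →L[ℂ] H) :=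
  ⟨fun {s} c _ ha => s.toStarSubalgebra.smul_mem ha c⟩

/-- An element of a `*`-ring is positive if it is of the form `star z * z`. -/
def IsPosElem {A : Type*} [Mul A] [Star A] (x : A) : Prop :=
  ∃ z : A, x = star z * z

/-- A Hilbert bimodule over a concrete von Neumann algebra `M ⊆ B(K)`: a complex Hilbert
space `E` together with a unital `*`-homomorphism `L : M → B(E)` (the left action) and a
unital `*`-antihomomorphism `M → B(E)` (the right action, encoded as a unital
`*`-homomorphism `R` on the opposite algebra `Mᵐᵒᵖ`) with commuting ranges. -/
structure HilbertBimodule {K : Type*} [NormedAddCommGroup K] [InnerProductSpace ℂ K]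
    [CompleteSpace K] (M : VonNeumannAlgebra K)
    (E : Type*) [NormedAddCommGroup E] [InnerProductSpace ℂ E] [CompleteSpace E] where
  L : M →⋆ₐ[ℂ] (E →L[ℂ] E)
  R : (↥M)ᵐᵒᵖ →⋆ₐ[ℂ] (E →L[ℂ] E)
  commutes : ∀ (x y : M) (ξ : E),
    L x (R (MulOpposite.op y) ξ) = R (MulOpposite.op y) (L x ξ)

namespace HilbertBimodule

variable {K : Type*} [NormedAddCommGroup K] [InnerProductSpace ℂ K] [CompleteSpace K]
  {M : VonNeumannAlgebra K} {E : Type*} [NormedAddCommGroup E] [InnerProductSpace ℂ E]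
  [CompleteSpace E]

/-- The left action `x ξ`. -/
def lsmul (b : HilbertBimodule M E) (x : M) (ξ : E) : E := b.L x ξ

/-- The right action `ξ x`. -/
def rsmul (b : HilbertBimodule M E) (ξ : E) (x : M) : E := b.R (MulOpposite.op x) ξ

end HilbertBimodule

/-- Two `n`-tuples of unit vectors in a Hilbert `M`-bimodule are almost `δ`-related. -/
def HilbertBimodule.AlmostRelated {K : Type*} [NormedAddCommGroup K] [InnerProductSpace ℂ K]
    [CompleteSpace K] {M : VonNeumannAlgebra K}
    {E : Type*} [NormedAddCommGroup E] [InnerProductSpace ℂ E] [CompleteSpace E]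
    (b : HilbertBimodule M E) (δ : ℝ) {n : ℕ} (ξ η : Fin n → E) : Prop :=
  ∀ ε : ℝ, 0 < ε → ∃ (p : ℕ) (a : Fin p → M), ∀ k : Fin n,
    ‖b.lsmul (1 - ∑ j, star (a j) * a j) (ξ k)‖ < ε ∧
    ‖b.lsmul (1 - ∑ j, star (a j) * a j) (η k)‖ < ε ∧
    ‖b.rsmul (ξ k) (1 - ∑ j, star (a j) * a j)‖ < ε ∧
    ‖b.rsmul (η k) (1 - ∑ j, star (a j) * a j)‖ < ε ∧
    ‖b.lsmul (1 - ∑ j, a j * star (a j)) (ξ k)‖ < ε ∧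
    ‖b.lsmul (1 - ∑ j, a j * star (a j)) (η k)‖ < ε ∧
    ‖b.rsmul (ξ k) (1 - ∑ j, a j * star (a j))‖ < ε ∧
    ‖b.rsmul (η k) (1 - ∑ j, a j * star (a j))‖ < ε ∧
    (∑ j, ‖b.lsmul (a j) (ξ k) - b.rsmul (η k) (a j)‖ ^ 2) < δ

set_option linter.unusedSectionVars false
set_option linter.unusedVariables false

section
open scoped ComplexOrder

namespace AUE

/-- Russo-Dye splitting. -/
lemma exists_unitary_add {A : Type*} [CStarAlgebra A] (u x : A) (hu : u ∈ unitary A)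
    (hx : ‖x‖ < 1) : ∃ w₁ ∈ unitary A, ∃ w₂ ∈ unitary A, u + x = w₁ + w₂ := by
  let _ := CStarAlgebra.spectralOrder A
  let _ := CStarAlgebra.spectralOrderedRing A
  rcases subsingleton_or_nontrivial A with hA | hA
  · exact ⟨u, hu, u, hu, Subsingleton.elim _ _⟩
  have hun : ‖u‖ = 1 := CStarRing.norm_of_mem_unitary hu
  have hxu : ‖-(star u * x)‖ < 1 := by
    rw [norm_neg]
    calc ‖star u * x‖ ≤ ‖star u‖ * ‖x‖ := norm_mul_le _ _
      _ < 1 := by rw [norm_star, hun, one_mul]; exact hx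
  have h1 : IsUnit (1 + star u * x) := by
    have := isUnit_one_sub_of_norm_lt_one hxu
    simpa using this
  have huU : IsUnit u := ⟨⟨u, star u, hu.2, hu.1⟩, rfl⟩
  set y : A := (2⁻¹ : ℂ) • (u + x) with hy
  have hyeq : u + x = u * (1 + star u * x) := by
    rw [mul_add, mul_one, ← mul_assoc, hu.2, one_mul]
  have hyU : IsUnit y := by
    have h2 : IsUnit (algebraMap ℂ A 2⁻¹) := (isUnit_iff_ne_zero.2 (by norm_num)).map _
    rw [hy, hyeq, Algebra.smul_def]
    exact h2.mul (huU.mul h1)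
  have hyn : ‖y‖ ≤ 1 := by
    rw [hy, norm_smul]
    have : ‖u + x‖ ≤ 2 := by
      calc ‖u + x‖ ≤ ‖u‖ + ‖x‖ := norm_add_le _ _
        _ ≤ 2 := by linarith
    norm_num
    linarith
  set h : A := CFC.sqrt (star y * y) with hh
  have hpos : 0 ≤ star y * y := star_mul_self_nonneg y
  have hh0 : 0 ≤ h := CFC.sqrt_nonneg _
  have hhsa : star h = h := (IsSelfAdjoint.of_nonneg hh0).star_eq
  have hsq : h * h = star y * y := CFC.sqrt_mul_sqrt_self _ hpos
  have hhU : IsUnit h := by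
    have : IsUnit (h ^ 2) := by
      rw [pow_two, hsq]; exact hyU.star.mul hyU
    exact (isUnit_pow_iff two_ne_zero).1 this
  have hhn : ‖h‖ ≤ 1 := by
    have : ‖h‖ * ‖h‖ = ‖y‖ * ‖y‖ := by
      rw [← CStarRing.norm_star_mul_self, ← CStarRing.norm_star_mul_self, hhsa, hsq]
    nlinarith [norm_nonneg h, norm_nonneg y]
  obtain ⟨H, hH⟩ := hhU
  set k : A := (↑H⁻¹ : A) with hk
  have hkh : k * h = 1 := by rw [← hH]; simp [hk]
  have hhk : h * k = 1 := by rw [← hH]; simp [hk]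
  have hks : star k = k := by
    have e1 : h * star k = 1 := by
      have := congrArg star hkh
      rwa [star_mul, hhsa, star_one] at this
    calc star k = (k * h) * star k := by rw [hkh, one_mul]
      _ = k := by rw [mul_assoc, e1, mul_one]
  set w : A := y * k with hw
  have hw1 : star w * w = 1 := by
    calc star w * w = k * (star y * y) * k := by rw [hw, star_mul, hks]; noncomm_ring
      _ = (k * h) * (h * k) := by rw [← hsq]; noncomm_ring
      _ = 1 := by rw [hkh, hhk, one_mul]
  have hwU : IsUnit w := hyU.mul ⟨H⁻¹, rfl⟩
  have hwu : w ∈ unitary A := by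
    refine ⟨hw1, ?_⟩
    obtain ⟨W, hW⟩ := hwU
    have : star w = ↑W⁻¹ := by
      calc star w = star w * (w * ↑W⁻¹) := by rw [← hW]; simp
        _ = ↑W⁻¹ := by rw [← mul_assoc, hw1, one_mul]
    rw [this, ← hW]; simp
  have hwh : w * h = y := by rw [hw, mul_assoc, hkh, mul_one]
  have hc := IsSelfAdjoint.self_add_I_smul_cfcSqrt_sub_sq_mem_unitary h hhsa hhn
  set q : A := CFC.sqrt (1 - h ^ 2) with hq
  have hqs : star q = q := (IsSelfAdjoint.of_nonneg (CFC.sqrt_nonneg _)).star_eq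
  refine ⟨w * (h + Complex.I • q), mul_mem hwu hc, w * star (h + Complex.I • q),
    mul_mem hwu (Unitary.star_mem hc), ?_⟩
  rw [star_add, star_smul, hhsa, hqs, ← mul_add]
  have : (h + Complex.I • q + (h + star Complex.I • q)) = (2 : ℂ) • h := by
    simp only [two_smul, Complex.star_def, Complex.conj_I, neg_smul]
    abel
  rw [this, mul_smul_comm, hwh, hy, smul_smul]
  norm_num

lemma exists_unitary_ge {A : Type*} [CStarAlgebra A] (g : A →ₗ[ℝ] ℝ) (C : ℝ)
    (hg : ∀ u ∈ unitary A, g u ≤ C) (x : A) (hx : ‖x‖ < 1) (ε : ℝ) (hε : 0 < ε) :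
    ∃ u ∈ unitary A, g x - ε ≤ g u := by
  set S : Set ℝ := g '' (unitary A : Set A) with hS
  have hne : S.Nonempty := ⟨g 1, 1, one_mem _, rfl⟩
  have hbd : BddAbove S := ⟨C, by rintro _ ⟨u, hu, rfl⟩; exact hg u hu⟩
  obtain ⟨_, ⟨u, hu, rfl⟩, hu2⟩ := exists_lt_of_lt_csSup hne (sub_lt_self (sSup S) (half_pos hε))
  obtain ⟨w₁, h₁, w₂, h₂, h⟩ := exists_unitary_add u x hu hx
  have e := congrArg g h
  rw [map_add, map_add] at e
  have k₁ : g w₁ ≤ sSup S := le_csSup hbd ⟨w₁, h₁, rfl⟩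
  have k₂ : g w₂ ≤ sSup S := le_csSup hbd ⟨w₂, h₂, rfl⟩
  exact ⟨u, hu, by linarith⟩

/-- A Hilbert bimodule over a C*-algebra. -/
structure Bim (A E : Type*) [CStarAlgebra A] [NormedAddCommGroup E] [InnerProductSpace ℂ E]
    [CompleteSpace E] where
  l : A →⋆ₐ[ℂ] (E →L[ℂ] E)
  r : Aᵐᵒᵖ →⋆ₐ[ℂ] (E →L[ℂ] E)
  comm' : ∀ (x y : A) (ξ : E), l x (r (MulOpposite.op y) ξ) = r (MulOpposite.op y) (l x ξ)

namespace Bim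

variable {A E : Type*} [CStarAlgebra A] [NormedAddCommGroup E] [InnerProductSpace ℂ E]
    [CompleteSpace E] (b : Bim A E)

/-- left action -/
def lm (x : A) : E →L[ℂ] E := b.l x
/-- right action -/
def rm (x : A) : E →L[ℂ] E := b.r (MulOpposite.op x)

lemma comm (x y : A) (ζ : E) : b.lm x (b.rm y ζ) = b.rm y (b.lm x ζ) := b.comm' x y ζ
lemma lm_add (x y : A) (ζ : E) : b.lm (x + y) ζ = b.lm x ζ + b.lm y ζ := by simp [lm]
lemma rm_add (x y : A) (ζ : E) : b.rm (x + y) ζ = b.rm x ζ + b.rm y ζ := by simp [rm]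
lemma lm_sub (x y : A) (ζ : E) : b.lm (x - y) ζ = b.lm x ζ - b.lm y ζ := by simp [lm]
lemma rm_sub (x y : A) (ζ : E) : b.rm (x - y) ζ = b.rm x ζ - b.rm y ζ := by simp [rm]
lemma lm_neg (x : A) (ζ : E) : b.lm (-x) ζ = -b.lm x ζ := by simp [lm]
lemma rm_neg (x : A) (ζ : E) : b.rm (-x) ζ = -b.rm x ζ := by simp [rm]
lemma lm_smul (c : ℂ) (x : A) (ζ : E) : b.lm (c • x) ζ = c • b.lm x ζ := by simp [lm]
lemma rm_smul (c : ℂ) (x : A) (ζ : E) : b.rm (c • x) ζ = c • b.rm x ζ := by simp [rm]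
lemma lm_one (ζ : E) : b.lm 1 ζ = ζ := by simp [lm]
lemma rm_one (ζ : E) : b.rm 1 ζ = ζ := by simp [rm]
lemma lm_mul (x y : A) (ζ : E) : b.lm (x * y) ζ = b.lm x (b.lm y ζ) := by simp [lm]
lemma rm_mul (x y : A) (ζ : E) : b.rm (x * y) ζ = b.rm y (b.rm x ζ) := by simp [rm]
lemma lm_sum {ι : Type*} (s : Finset ι) (x : ι → A) (ζ : E) :
    b.lm (∑ i ∈ s, x i) ζ = ∑ i ∈ s, b.lm (x i) ζ := by
  simp [lm]
lemma rm_sum {ι : Type*} (s : Finset ι) (x : ι → A) (ζ : E) :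
    b.rm (∑ i ∈ s, x i) ζ = ∑ i ∈ s, b.rm (x i) ζ := by
  simp [rm]

lemma inner_lm (x : A) (ζ θ : E) : inner ℂ (b.lm x ζ) θ = inner ℂ ζ (b.lm (star x) θ) := by
  simp [lm, ContinuousLinearMap.star_eq_adjoint, ContinuousLinearMap.adjoint_inner_right, map_star]
lemma inner_rm (x : A) (ζ θ : E) : inner ℂ (b.rm x ζ) θ = inner ℂ ζ (b.rm (star x) θ) := by
  simp [rm, ContinuousLinearMap.star_eq_adjoint, ContinuousLinearMap.adjoint_inner_right,
    MulOpposite.op_star, map_star]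

lemma norm_lm (x : A) (ζ : E) : ‖b.lm x ζ‖ ≤ ‖x‖ * ‖ζ‖ :=
  (ContinuousLinearMap.le_opNorm _ _).trans
    (mul_le_mul_of_nonneg_right (NonUnitalStarAlgHom.norm_apply_le b.l x) (norm_nonneg _))
lemma norm_rm (x : A) (ζ : E) : ‖b.rm x ζ‖ ≤ ‖x‖ * ‖ζ‖ :=
  (ContinuousLinearMap.le_opNorm _ _).trans
    (mul_le_mul_of_nonneg_right (NonUnitalStarAlgHom.norm_apply_le b.r (MulOpposite.op x))
      (norm_nonneg _))

lemma norm_lm_one {x : A} (hx : ‖x‖ ≤ 1) (ζ : E) : ‖b.lm x ζ‖ ≤ ‖ζ‖ :=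
  (b.norm_lm x ζ).trans (mul_le_of_le_one_left (norm_nonneg _) hx)
lemma norm_rm_one {x : A} (hx : ‖x‖ ≤ 1) (ζ : E) : ‖b.rm x ζ‖ ≤ ‖ζ‖ :=
  (b.norm_rm x ζ).trans (mul_le_of_le_one_left (norm_nonneg _) hx)

lemma normsq_lm (x : A) (ζ : E) : ‖b.lm x ζ‖ ^ 2 = (inner ℂ (b.lm (star x * x) ζ) ζ).re := by
  rw [lm_mul, inner_lm, star_star]
  exact (inner_self_eq_norm_sq (𝕜 := ℂ) (b.lm x ζ)).symm
lemma normsq_rm (x : A) (ζ : E) : ‖b.rm x ζ‖ ^ 2 = (inner ℂ (b.rm (x * star x) ζ) ζ).re := by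
  rw [rm_mul, inner_rm, star_star]
  exact (inner_self_eq_norm_sq (𝕜 := ℂ) (b.rm x ζ)).symm

lemma sum_lm_eq {ι : Type*} [Fintype ι] (w : ι → A) (ζ : E) :
    ∑ i, ‖b.lm (w i) ζ‖ ^ 2 = (inner ℂ (b.lm (∑ i, star (w i) * w i) ζ) ζ).re := by
  rw [lm_sum, sum_inner, Complex.re_sum]
  exact Finset.sum_congr rfl fun i _ => b.normsq_lm _ _
lemma sum_rm_eq {ι : Type*} [Fintype ι] (w : ι → A) (ζ : E) :
    ∑ i, ‖b.rm (w i) ζ‖ ^ 2 = (inner ℂ (b.rm (∑ i, w i * star (w i)) ζ) ζ).re := by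
  rw [rm_sum, sum_inner, Complex.re_sum]
  exact Finset.sum_congr rfl fun i _ => b.normsq_rm _ _

section order
variable [PartialOrder A] [StarOrderedRing A]

lemma re_lm_nonneg {x : A} (hx : 0 ≤ x) (ζ : E) : 0 ≤ (inner ℂ (b.lm x ζ) ζ).re := by
  obtain ⟨c, rfl⟩ := CStarAlgebra.nonneg_iff_eq_star_mul_self.1 hx
  rw [← normsq_lm]; positivity
lemma re_rm_nonneg {x : A} (hx : 0 ≤ x) (ζ : E) : 0 ≤ (inner ℂ (b.rm x ζ) ζ).re := by
  obtain ⟨c, rfl⟩ := CStarAlgebra.nonneg_iff_eq_star_mul_self.1 hx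
  have := b.normsq_rm (star c) ζ
  rw [star_star] at this
  rw [← this]; positivity
lemma re_lm_mono {x y : A} (hx : x ≤ y) (ζ : E) :
    (inner ℂ (b.lm x ζ) ζ).re ≤ (inner ℂ (b.lm y ζ) ζ).re := by
  have := b.re_lm_nonneg (sub_nonneg.2 hx) ζ
  rw [lm_sub, inner_sub_left, Complex.sub_re] at this
  linarith
lemma re_rm_mono {x y : A} (hx : x ≤ y) (ζ : E) :
    (inner ℂ (b.rm x ζ) ζ).re ≤ (inner ℂ (b.rm y ζ) ζ).re := by
  have := b.re_rm_nonneg (sub_nonneg.2 hx) ζ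
  rw [rm_sub, inner_sub_left, Complex.sub_re] at this
  linarith

lemma sum_lm_le {ι : Type*} [Fintype ι] {w : ι → A} (h : ∑ i, star (w i) * w i ≤ 1) (ζ : E) :
    ∑ i, ‖b.lm (w i) ζ‖ ^ 2 ≤ ‖ζ‖ ^ 2 := by
  rw [sum_lm_eq]
  refine (b.re_lm_mono h ζ).trans_eq ?_
  rw [lm_one]; exact inner_self_eq_norm_sq (𝕜 := ℂ) ζ
lemma sum_rm_le {ι : Type*} [Fintype ι] {w : ι → A} (h : ∑ i, w i * star (w i) ≤ 1) (ζ : E) :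
    ∑ i, ‖b.rm (w i) ζ‖ ^ 2 ≤ ‖ζ‖ ^ 2 := by
  rw [sum_rm_eq]
  refine (b.re_rm_mono h ζ).trans_eq ?_
  rw [rm_one]; exact inner_self_eq_norm_sq (𝕜 := ℂ) ζ
lemma sum_lm_star_le {ι : Type*} [Fintype ι] {w : ι → A} (h : ∑ i, w i * star (w i) ≤ 1) (ζ : E) :
    ∑ i, ‖b.lm (star (w i)) ζ‖ ^ 2 ≤ ‖ζ‖ ^ 2 :=
  b.sum_lm_le (w := fun i => star (w i)) (by simpa using h) ζ
lemma sum_rm_star_le {ι : Type*} [Fintype ι] {w : ι → A} (h : ∑ i, star (w i) * w i ≤ 1) (ζ : E) :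
    ∑ i, ‖b.rm (star (w i)) ζ‖ ^ 2 ≤ ‖ζ‖ ^ 2 :=
  b.sum_rm_le (w := fun i => star (w i)) (by simpa using h) ζ

end order
end Bim
end AUE

namespace AUE
namespace Bim
variable {A E : Type*} [CStarAlgebra A] [NormedAddCommGroup E] [InnerProductSpace ℂ E]
    [CompleteSpace E] (b : Bim A E)

/-- `x` approximately intertwines `ξ` and `η`. -/
def Int (x : A) (ξ η : E) (τ : ℝ) : Prop := ‖b.lm x ξ - b.rm x η‖ ≤ τ

variable {b}

lemma Int.mono {x : A} {ξ η : E} {τ τ' : ℝ} (h : b.Int x ξ η τ) (hτ : τ ≤ τ') :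
    b.Int x ξ η τ' := le_trans h hτ

lemma Int.mul {x y : A} {ξ η ζ : E} {τ₁ τ₂ : ℝ} (hx : ‖x‖ ≤ 1) (hy : ‖y‖ ≤ 1)
    (h₂ : b.Int y η ζ τ₂) (h₁ : b.Int x ξ η τ₁) : b.Int (y * x) ξ ζ (τ₁ + τ₂) := by
  unfold Int at *
  have e : b.lm (y * x) ξ - b.rm (y * x) ζ
      = b.lm y (b.lm x ξ - b.rm x η) + b.rm x (b.lm y η - b.rm y ζ) := by
    rw [lm_mul, rm_mul, map_sub, map_sub, b.comm]; abel
  rw [e]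
  exact (norm_add_le _ _).trans (add_le_add ((b.norm_lm_one hy _).trans h₁)
    ((b.norm_rm_one hx _).trans h₂))

lemma Int.one_sub {x : A} {ξ : E} {τ : ℝ} (h : b.Int x ξ ξ τ) : b.Int (1 - x) ξ ξ τ := by
  unfold Int at *
  have e : b.lm (1 - x) ξ - b.rm (1 - x) ξ = -(b.lm x ξ - b.rm x ξ) := by
    rw [lm_sub, rm_sub, lm_one, rm_one]; abel
  rwa [e, norm_neg]

lemma Int.add {x y : A} {ξ η : E} {τ₁ τ₂ : ℝ}
    (h₁ : b.Int x ξ η τ₁) (h₂ : b.Int y ξ η τ₂) : b.Int (x + y) ξ η (τ₁ + τ₂) := by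
  unfold Int at *
  have e : b.lm (x + y) ξ - b.rm (x + y) η
      = (b.lm x ξ - b.rm x η) + (b.lm y ξ - b.rm y η) := by
    rw [lm_add, rm_add]; abel
  rw [e]
  exact (norm_add_le _ _).trans (add_le_add h₁ h₂)

lemma Int.smul {x : A} {ξ η : E} {τ : ℝ} (c : ℂ)
    (h : b.Int x ξ η τ) : b.Int (c • x) ξ η (‖c‖ * τ) := by
  unfold Int at *
  rw [lm_smul, rm_smul, ← smul_sub, norm_smul]
  gcongr

lemma Int.neg {x : A} {ξ η : E} {τ : ℝ}
    (h : b.Int x ξ η τ) : b.Int (-x) ξ η τ := by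
  unfold Int at *
  rwa [lm_neg, rm_neg, ← neg_sub', norm_neg]

variable (b)

lemma inner_swap (x : A) (ξ η : E) :
    inner ℂ (b.lm (star x) η) (b.rm (star x) ξ) = inner ℂ (b.rm x η) (b.lm x ξ) := by
  rw [inner_lm, star_star, b.comm, inner_rm]

lemma re_inner_le (x y : E) : (inner ℂ x y).re ≤ ‖x‖ * ‖y‖ := re_inner_le_norm (𝕜 := ℂ) x y
lemma re_inner_self (x : E) : (inner ℂ x x).re = ‖x‖ ^ 2 := inner_self_eq_norm_sq (𝕜 := ℂ) x

lemma mass_compare {v : A} {ξ η : E} {τ : ℝ} (hv : ‖v‖ ≤ 1) (hξ : ‖ξ‖ = 1) (hη : ‖η‖ = 1)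
    (h₁ : b.Int v ξ η τ) (h₂ : b.Int (star v) η ξ τ) :
    |‖b.lm (star v) η‖ ^ 2 - ‖b.lm v ξ‖ ^ 2| ≤ 2 * τ := by
  unfold Int at *
  have hv' : ‖star v‖ ≤ 1 := by rwa [norm_star]
  have n1 : ‖b.lm (star v) η‖ ≤ 1 := hη ▸ b.norm_lm_one hv' η
  have n2 : ‖b.lm v ξ‖ ≤ 1 := hξ ▸ b.norm_lm_one hv ξ
  have e : (((‖b.lm (star v) η‖ ^ 2 - ‖b.lm v ξ‖ ^ 2 : ℝ)) : ℂ)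
      = inner ℂ (b.lm (star v) η) (b.lm (star v) η - b.rm (star v) ξ)
        - inner ℂ (b.lm v ξ - b.rm v η) (b.lm v ξ) := by
    rw [inner_sub_right, inner_sub_left, inner_swap, inner_self_eq_norm_sq_to_K,
      inner_self_eq_norm_sq_to_K]
    push_cast
    simp
  rw [← Real.norm_eq_abs, ← Complex.norm_real, e]
  have t1 := norm_inner_le_norm (𝕜 := ℂ) (b.lm (star v) η) (b.lm (star v) η - b.rm (star v) ξ)
  have t2 := norm_inner_le_norm (𝕜 := ℂ) (b.lm v ξ - b.rm v η) (b.lm v ξ)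
  refine (norm_sub_le _ _).trans ?_
  nlinarith [norm_nonneg (b.lm (star v) η), norm_nonneg (b.lm v ξ),
    norm_nonneg (b.lm (star v) η - b.rm (star v) ξ), norm_nonneg (b.lm v ξ - b.rm v η)]

lemma final_step {v : A} {ξ η : E} {κ : ℝ} (hκ : 0 < κ) (hκ1 : κ ≤ 1)
    (hv : ‖v‖ ≤ 1) (hξ : ‖ξ‖ = 1) (hη : ‖η‖ = 1)
    (h₁ : b.Int v ξ η κ) (h₂ : b.Int (star v) η ξ κ)
    (hm : 1 - ‖b.lm (star v) η‖ ^ 2 ≤ κ) :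
    ∃ u ∈ unitary A, ∃ S : ℝ, 0 ≤ S ∧ S ^ 2 ≤ 28 * κ ∧ ‖b.lm u ξ - b.rm u η‖ ≤ κ + S := by
  have hmc := abs_le.1 (b.mass_compare hv hξ hη h₁ h₂)
  unfold Int at *
  have n2 : ‖b.lm v ξ‖ ≤ 1 := hξ ▸ b.norm_lm_one hv ξ
  have n3 : ‖b.rm v η‖ ≤ 1 := hη ▸ b.norm_rm_one hv η
  have n4 : ‖b.lm v ξ‖ - ‖b.rm v η‖ ≤ κ := (norm_sub_norm_le _ _).trans h₁
  let g : A →ₗ[ℝ] ℝ :=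
    { toFun := fun x => (inner ℂ (b.lm x ξ) (b.lm v ξ)).re + (inner ℂ (b.rm x η) (b.rm v η)).re
      map_add' := fun x y => by
        simp only [lm_add, rm_add, inner_add_left, Complex.add_re]; ring
      map_smul' := fun c x => by
        have : c • x = (c : ℂ) • x := by simp
        simp only [this, lm_smul, rm_smul, inner_smul_left, Complex.conj_ofReal,
          Complex.re_ofReal_mul, RingHom.id_apply, smul_eq_mul]; ring }
  have hgdef : ∀ x, g x = (inner ℂ (b.lm x ξ) (b.lm v ξ)).re + (inner ℂ (b.rm x η) (b.rm v η)).re :=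
    fun x => rfl
  have hun : ∀ u ∈ unitary A, ‖b.lm u ξ‖ ≤ 1 ∧ ‖b.rm u η‖ ≤ 1 := by
    intro u hu
    have hu1 : ‖u‖ ≤ 1 := by
      rcases subsingleton_or_nontrivial A with hA | hA
      · rw [Subsingleton.elim u 0, norm_zero]; exact zero_le_one
      · exact (CStarRing.norm_of_mem_unitary hu).le
    exact ⟨hξ ▸ b.norm_lm_one hu1 ξ, hη ▸ b.norm_rm_one hu1 η⟩
  obtain ⟨u, hu, hgu⟩ := exists_unitary_ge g 2 (fun u hu => by
    obtain ⟨k1, k2⟩ := hun u hu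
    rw [hgdef]
    have t1 := re_inner_le (b.lm u ξ) (b.lm v ξ)
    have t2 := re_inner_le (b.rm u η) (b.rm v η)
    nlinarith [norm_nonneg (b.lm u ξ), norm_nonneg (b.lm v ξ), norm_nonneg (b.rm u η),
      norm_nonneg (b.rm v η)]) (((1 - κ) : ℝ) • v) (by
        rw [norm_smul, Real.norm_of_nonneg (by linarith)]; nlinarith [norm_nonneg v]) κ hκ
  obtain ⟨k1, k2⟩ := hun u hu
  rw [map_smul, hgdef, hgdef, re_inner_self, re_inner_self, smul_eq_mul] at hgu
  have s1 := @norm_sub_sq ℂ E _ _ _ (b.lm u ξ) (b.lm v ξ)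
  have s2 := @norm_sub_sq ℂ E _ _ _ (b.rm u η) (b.rm v η)
  simp only [RCLike.re_eq_complex_re] at s1 s2
  refine ⟨u, hu, ‖b.lm u ξ - b.lm v ξ‖ + ‖b.rm u η - b.rm v η‖, by positivity, ?_, ?_⟩
  · have q1 : 1 - 3 * κ ≤ ‖b.lm v ξ‖ ^ 2 := by linarith
    have q2 : 1 - 5 * κ ≤ ‖b.rm v η‖ ^ 2 := by
      nlinarith [norm_nonneg (b.lm v ξ), norm_nonneg (b.rm v η)]
    have q3 : ‖b.lm u ξ‖ ^ 2 ≤ 1 := by nlinarith [norm_nonneg (b.lm u ξ)]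
    have q4 : ‖b.rm u η‖ ^ 2 ≤ 1 := by nlinarith [norm_nonneg (b.rm u η)]
    have q5 : ‖b.lm v ξ‖ ^ 2 ≤ 1 := by nlinarith [norm_nonneg (b.lm v ξ)]
    have q6 : ‖b.rm v η‖ ^ 2 ≤ 1 := by nlinarith [norm_nonneg (b.rm v η)]
    have q7 : ‖b.lm u ξ - b.lm v ξ‖ ^ 2 + ‖b.rm u η - b.rm v η‖ ^ 2 ≤ 14 * κ := by
      nlinarith
    nlinarith [sq_nonneg (‖b.lm u ξ - b.lm v ξ‖ - ‖b.rm u η - b.rm v η‖)]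
  · have : b.lm u ξ - b.rm u η = (b.lm v ξ - b.rm v η) + ((b.lm u ξ - b.lm v ξ)
        - (b.rm u η - b.rm v η)) := by abel
    rw [this]
    exact (norm_add_le _ _).trans (add_le_add h₁ (norm_sub_le _ _))

/-- Abstract resolvent data. -/
lemma trunc_int {x R R' Y : A} (h1 : R + star x * Y = 1) (h2 : R' + Y * star x = 1)
    (h3 : x * R = Y) (h4 : R' * x = Y) (n1 : ‖R‖ ≤ 1) (n2 : ‖R'‖ ≤ 1) (n3 : ‖Y‖ ≤ 1)
    {ξ η : E} {d₁ d₂ : ℝ} (i1 : b.Int x ξ η d₁) (i2 : b.Int (star x) η ξ d₂) :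
    b.Int Y ξ η (d₁ + d₂) := by
  unfold Int at *
  have e : b.lm Y ξ - b.rm Y η = b.lm R' (b.rm R (b.lm x ξ - b.rm x η))
      - b.lm Y (b.rm Y (b.lm (star x) η - b.rm (star x) ξ)) := by
    simp only [map_sub]
    have a1 : b.lm R' (b.rm R (b.lm x ξ)) = b.lm Y (b.rm R ξ) := by
      rw [← b.comm, ← lm_mul, h4]
    have a2 : b.lm R' (b.rm R (b.rm x η)) = b.lm R' (b.rm Y η) := by
      rw [← rm_mul, h3]
    have a3 : b.lm Y (b.rm Y (b.lm (star x) η)) = b.lm (Y * star x) (b.rm Y η) := by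
      rw [← b.comm, ← lm_mul]
    have a4 : b.lm Y (b.rm Y (b.rm (star x) ξ)) = b.lm Y (b.rm (star x * Y) ξ) := by
      rw [← rm_mul]
    rw [a1, a2, a3, a4]
    have c1 : b.lm Y ξ = b.lm Y (b.rm R ξ) + b.lm Y (b.rm (star x * Y) ξ) := by
      rw [← map_add, ← rm_add, h1, rm_one]
    have c2 : b.rm Y η = b.lm R' (b.rm Y η) + b.lm (Y * star x) (b.rm Y η) := by
      rw [← lm_add, h2, lm_one]
    rw [c1]
    nth_rw 1 [c2]
    abel
  rw [e]
  refine (norm_sub_le _ _).trans (add_le_add ?_ ?_)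
  · exact (b.norm_lm_one n2 _).trans ((b.norm_rm_one n1 _).trans i1)
  · exact (b.norm_lm_one n3 _).trans ((b.norm_rm_one n3 _).trans i2)

lemma norm_le_one_of {A : Type*} [CStarAlgebra A] [PartialOrder A] [StarOrderedRing A] {c : A}
    (h : star c * c ≤ 1) : ‖c‖ ≤ 1 := by
  have h2 := (CStarAlgebra.norm_le_one_iff_of_nonneg (star c * c) (star_mul_self_nonneg c)).2 h
  rw [CStarRing.norm_star_mul_self] at h2
  nlinarith [norm_nonneg c]

lemma resolvent {A : Type*} [CStarAlgebra A] [PartialOrder A] [StarOrderedRing A] (x : A) :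
    ∃ R : A, star R = R ∧ R * (1 + star x * x) = 1 ∧ (1 + star x * x) * R = 1 ∧ ‖R‖ ≤ 1 ∧
      ‖x * R‖ ≤ 1 := by
  set h : A := star x * x with hh
  have h0 : 0 ≤ h := star_mul_self_nonneg x
  have hs : star h = h := by simp [hh]
  have hU : IsUnit (1 + h) := CStarAlgebra.isUnit_of_le (1 : A) (by simpa using h0) isStrictlyPositive_one
  obtain ⟨U, hU⟩ := hU
  set R : A := ↑U⁻¹ with hR
  have r1 : R * (1 + h) = 1 := by rw [← hU]; simp [hR]
  have r2 : (1 + h) * R = 1 := by rw [← hU]; simp [hR]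
  have rs : star R = R := by
    have e1 : (1 + h) * star R = 1 := by
      have := congrArg star r1
      rwa [star_mul, star_add, star_one, hs] at this
    calc star R = (R * (1 + h)) * star R := by rw [r1, one_mul]
      _ = R := by rw [mul_assoc, e1, mul_one]
  have key : (1 : A) = R * R + (2 : ℕ) • (R * h * R) + R * (h * h) * R := by
    calc (1 : A) = (R * (1 + h)) * ((1 + h) * R) := by rw [r1, r2, one_mul]
      _ = _ := by noncomm_ring
  have p1 : 0 ≤ R * h * R := by
    have := star_left_conjugate_nonneg h0 R
    rwa [rs] at this
  have p2 : 0 ≤ R * R := by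
    have := star_mul_self_nonneg R
    rwa [rs] at this
  have p3 : 0 ≤ R * (h * h) * R := by
    have h2 : 0 ≤ h * h := by
      have := star_mul_self_nonneg h
      rwa [hs] at this
    have := star_left_conjugate_nonneg h2 R
    rwa [rs] at this
  refine ⟨R, rs, r1, r2, norm_le_one_of ?_, norm_le_one_of ?_⟩
  · rw [rs]
    calc R * R ≤ R * R + ((2 : ℕ) • (R * h * R) + R * (h * h) * R) :=
          le_add_of_nonneg_right (add_nonneg (nsmul_nonneg p1 2) p3)
      _ = 1 := by rw [← add_assoc]; exact key.symm
  · have : star (x * R) * (x * R) = R * h * R := by rw [star_mul, rs, hh]; noncomm_ring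
    rw [this]
    calc R * h * R ≤ R * h * R + (R * R + R * h * R + R * (h * h) * R) :=
          le_add_of_nonneg_right (add_nonneg (add_nonneg p2 p1) p3)
      _ = 1 := by rw [key, two_smul]; abel

lemma trunc [PartialOrder A] [StarOrderedRing A] (x : A) : ∃ Y : A, ‖Y‖ ≤ 1 ∧
    (∀ ζ, ‖b.lm (star x) ζ - b.lm (star Y) ζ‖ ≤ ‖b.lm (x * star x) ζ‖) ∧
    ∀ (ξ η : E) (d₁ d₂ : ℝ), b.Int x ξ η d₁ → b.Int (star x) η ξ d₂ →
      b.Int Y ξ η (d₁ + d₂) ∧ b.Int (star Y) η ξ (d₁ + d₂) := by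
  obtain ⟨R, rs, r1, r2, rn, rn'⟩ := resolvent x
  obtain ⟨R', rs', r1', r2', sn, sn'⟩ := resolvent (star x)
  rw [star_star] at r1' r2'
  have h4 : R' * x = x * R := by
    calc R' * x = R' * x * ((1 + star x * x) * R) := by rw [r2, mul_one]
      _ = (R' * (1 + x * star x)) * x * R := by noncomm_ring
      _ = x * R := by rw [r1', one_mul]
  have sY : star (x * R) = star x * R' := by rw [← h4, star_mul, rs']
  have e1 : R + star x * (x * R) = 1 := by rw [← r2]; noncomm_ring
  have e2 : R' + (x * R) * star x = 1 := by rw [← h4, ← r1']; noncomm_ring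
  have e3 : R' + star (star x) * (star x * R') = 1 := by rw [star_star, ← r2']; noncomm_ring
  have e4 : R + (star x * R') * star (star x) = 1 := by
    rw [star_star, mul_assoc, h4, ← r2]; noncomm_ring
  refine ⟨x * R, rn', ?_, ?_⟩
  · intro ζ
    have : star x = star (x * R) + star (x * R) * (x * star x) := by
      rw [sY]
      calc star x = star x * (R' * (1 + x * star x)) := by rw [r1', mul_one]
        _ = _ := by noncomm_ring
    nth_rw 1 [this]
    rw [lm_add, lm_mul _ (star (x * R)), add_sub_cancel_left]
    exact b.norm_lm_one (by rwa [norm_star]) _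
  · intro ξ η d₁ d₂ i1 i2
    refine ⟨b.trunc_int e1 e2 rfl h4 rn sn rn' i1 i2, ?_⟩
    rw [sY, add_comm]
    refine b.trunc_int e3 e4 rfl ?_ sn rn sn' i2 (by rwa [star_star])
    have := congrArg star h4
    rwa [star_mul, star_mul, rs', rs, eq_comm] at this

end Bim
end AUE

namespace AUE

/-- Expectation of `F` over random signed sums of a list. -/
def Ex {A : Type*} [AddCommGroup A] : List A → (A → ℝ) → ℝ
  | [], F => F 0
  | w :: l, F => (Ex l (fun x => F (w + x)) + Ex l (fun x => F (-w + x))) / 2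

section
variable {A : Type*} [AddCommGroup A]

lemma Ex_add (l : List A) : ∀ (F G : A → ℝ), Ex l (fun x => F x + G x) = Ex l F + Ex l G := by
  induction l with
  | nil => intro F G; rfl
  | cons w l ih =>
    intro F G
    simp only [Ex, ih (fun x => F (w + x)) (fun x => G (w + x)),
      ih (fun x => F (-w + x)) (fun x => G (-w + x))]
    ring

lemma Ex_mul (l : List A) (c : ℝ) : ∀ (F : A → ℝ), Ex l (fun x => c * F x) = c * Ex l F := by
  induction l with
  | nil => intro F; rfl
  | cons w l ih =>
    intro F
    simp only [Ex, ih (fun x => F (w + x)), ih (fun x => F (-w + x))]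
    ring

lemma exists_Ex_le (l : List A) : ∀ (F : A → ℝ), ∃ x, Ex l F ≤ F x := by
  induction l with
  | nil => intro F; exact ⟨0, le_rfl⟩
  | cons w l ih =>
    intro F
    obtain ⟨x, hx⟩ := ih (fun x => F (w + x))
    obtain ⟨y, hy⟩ := ih (fun x => F (-w + x))
    simp only [Ex]
    rcases le_total (F (w + x)) (F (-w + y)) with h | h
    · exact ⟨-w + y, by linarith⟩
    · exact ⟨w + x, by linarith⟩

variable {E : Type*} [NormedAddCommGroup E] [InnerProductSpace ℂ E]

lemma pal (x y : E) : ‖x + y‖ ^ 2 + ‖x - y‖ ^ 2 = 2 * (‖x‖ ^ 2 + ‖y‖ ^ 2) := by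
  have := parallelogram_law_with_norm ℂ x y
  nlinarith

lemma norm_add_sq_le (x y : E) : ‖x + y‖ ^ 2 ≤ 2 * (‖x‖ ^ 2 + ‖y‖ ^ 2) := by
  have := pal x y
  nlinarith [sq_nonneg ‖x - y‖]

lemma Ex_lin (h : A →+ E) (l : List A) : ∀ c : E,
    Ex l (fun x => ‖c + h x‖ ^ 2) = ‖c‖ ^ 2 + (l.map fun w => ‖h w‖ ^ 2).sum := by
  induction l with
  | nil => intro c; simp [Ex]
  | cons w l ih =>
    intro c
    simp only [Ex, map_add, map_neg, ← add_assoc]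
    rw [ih (c + h w), ih (c + -h w)]
    have := pal c (h w)
    simp only [List.map_cons, List.sum_cons, ← sub_eq_add_neg]
    linarith

lemma Ex_lin' (h : A →+ E) (l : List A) :
    Ex l (fun x => ‖h x‖ ^ 2) = (l.map fun w => ‖h w‖ ^ 2).sum := by
  have := Ex_lin h l 0
  simpa using this

lemma Ex_quad (B : A →+ A →+ E) (l : List A) : ∀ c : E,
    Ex l (fun x => ‖c + B x x‖ ^ 2) ≤ ‖c + (l.map fun w => B w w).sum‖ ^ 2
      + 2 * (l.map fun w => (l.map fun w' => ‖B w w'‖ ^ 2).sum).sum := by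
  induction l with
  | nil => intro c; simp [Ex]
  | cons w l ih =>
    intro c
    let h : A →+ E := B w + B.flip w
    have hh : ∀ x, h x = B w x + B x w := fun x => rfl
    have key : Ex (w :: l) (fun x => ‖c + B x x‖ ^ 2)
        = Ex l (fun x => ‖(c + B w w) + B x x‖ ^ 2) + Ex l (fun x => ‖h x‖ ^ 2) := by
      simp only [Ex]
      rw [← Ex_add, ← Ex_add]
      rw [div_eq_iff two_ne_zero, mul_comm, ← Ex_mul]
      congr 1
      funext x
      rw [← pal]
      congr 3
      · rw [hh]; simp only [map_add, AddMonoidHom.add_apply]; abel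
      · rw [hh]; simp only [map_add, map_neg, AddMonoidHom.add_apply, AddMonoidHom.neg_apply]; abel
    rw [key, Ex_lin']
    have h1 := ih (c + B w w)
    have h2 : (l.map fun w' => ‖h w'‖ ^ 2).sum
        ≤ 2 * ((l.map fun w' => ‖B w w'‖ ^ 2).sum + (l.map fun w' => ‖B w' w‖ ^ 2).sum) := by
      rw [← List.sum_map_add, ← List.sum_map_mul_left]
      exact List.sum_le_sum fun i _ => by rw [hh]; exact norm_add_sq_le _ _
    simp only [List.map_cons, List.sum_cons, List.sum_map_add]
    rw [← add_assoc c]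
    nlinarith [sq_nonneg ‖B w w‖]

end

namespace Bim
variable {A E : Type*} [CStarAlgebra A] [NormedAddCommGroup E] [InnerProductSpace ℂ E]
    [CompleteSpace E] (b : Bim A E) [PartialOrder A] [StarOrderedRing A]

lemma list_sum {ι : Type*} [Fintype ι] {α : Type*} [AddCommMonoid α] {β : Type*}
    (w : ι → β) (f : β → α) :
    (((Finset.univ : Finset ι).toList.map w).map f).sum = ∑ i, f (w i) := by
  rw [List.map_map]
  exact Finset.sum_map_toList _ _

lemma rand_real {γ e P q m n : ℝ} (hγ : 0 < γ) (he : 0 < e) (hq : 0 ≤ q) (hm : 0 ≤ m) (hn : 0 ≤ n)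
    (hH : P ≤ q) (hF : γ / 2 ≤ P + ((-(γ / 12)) * q ^ 2
      + (-(50 / (e ^ 2 * γ))) * (m ^ 2 + n ^ 2))) :
    γ / 2 ≤ P ∧ q ≤ 12 / γ ∧ m ≤ e / 2 ∧ n ≤ e / 2 := by
  have hp : 0 < 50 / (e ^ 2 * γ) := by positivity
  have hpp : 0 ≤ 50 / (e ^ 2 * γ) * (m ^ 2 + n ^ 2) := by positivity
  have hqq : 0 ≤ γ * q ^ 2 := by positivity
  have hB : q ≤ 12 / γ := by
    rw [le_div_iff₀ hγ]
    by_contra hcon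
    push Not at hcon
    have hBpos : 0 < q := by
      rcases hq.lt_or_eq with h | h
      · exact h
      · rw [← h, zero_mul] at hcon; linarith
    nlinarith [mul_pos hBpos hγ]
  have hD : m ^ 2 + n ^ 2 ≤ e ^ 2 / 4 := by
    have : 50 / (e ^ 2 * γ) * (m ^ 2 + n ^ 2) ≤ 12 / γ := by linarith
    rw [div_mul_eq_mul_div, div_le_div_iff₀ (by positivity) hγ] at this
    have : 50 * (m ^ 2 + n ^ 2) * γ ≤ 12 * e ^ 2 * γ := by linarith
    have := le_of_mul_le_mul_right this hγ
    linarith [sq_nonneg e]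
  refine ⟨by linarith, hB, ?_, ?_⟩
  · exact abs_le_of_sq_le_sq' (by linarith [sq_nonneg n]) (by positivity) |>.2
  · exact abs_le_of_sq_le_sq' (by linarith [sq_nonneg m]) (by positivity) |>.2

lemma randomize {ι : Type*} [Fintype ι] (w : ι → A) (h₁ : ∑ i, star (w i) * w i ≤ 1)
    (h₂ : ∑ i, w i * star (w i) ≤ 1) {ξ η ζ : E} (hζ : ‖ζ‖ ≤ 1) {r : A} (hr : ‖r‖ ≤ 1)
    {γ e : ℝ} (hγ : 0 < γ) (hγ1 : γ ≤ 1) (he : 0 < e)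
    (hg : γ ≤ ∑ i, ‖b.lm r (b.lm (star (w i)) ζ)‖ ^ 2)
    (hd₁ : ∑ i, ‖b.lm (w i) ξ - b.rm (w i) η‖ ^ 2 ≤ (e * γ) ^ 2 / 400)
    (hd₂ : ∑ i, ‖b.lm (star (w i)) η - b.rm (star (w i)) ξ‖ ^ 2 ≤ (e * γ) ^ 2 / 400) :
    ∃ x : A, γ / 2 ≤ ‖b.lm r (b.lm (star x) ζ)‖ ^ 2 ∧ ‖b.lm (x * star x) ζ‖ ≤ 12 / γ ∧
      b.Int x ξ η (e / 2) ∧ b.Int (star x) η ξ (e / 2) := by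
  set l := (Finset.univ : Finset ι).toList.map w with hl
  let H1 : A →+ E := AddMonoidHom.mk' (fun x => b.lm r (b.lm (star x) ζ)) (fun x y => by
    rw [star_add, lm_add, map_add])
  let H2 : A →+ E := AddMonoidHom.mk' (fun x => b.lm x ξ - b.rm x η) (fun x y => by
    rw [lm_add, rm_add]; abel)
  let H3 : A →+ E := AddMonoidHom.mk' (fun x => b.lm (star x) η - b.rm (star x) ξ) (fun x y => by
    rw [star_add, lm_add, rm_add]; abel)
  let B : A →+ A →+ E := AddMonoidHom.mk' (fun x => AddMonoidHom.mk'
      (fun y => b.lm x (b.lm (star y) ζ)) (fun y z => by rw [star_add, lm_add, map_add]))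
      (fun x y => by ext z; simp [lm_add])
  have E1 : γ ≤ Ex l (fun x => ‖H1 x‖ ^ 2) := by
    rw [Ex_lin', hl, list_sum]; exact hg
  have E2 : Ex l (fun x => ‖H2 x‖ ^ 2) ≤ (e * γ) ^ 2 / 400 := by
    rw [Ex_lin', hl, list_sum]; exact hd₁
  have E3 : Ex l (fun x => ‖H3 x‖ ^ 2) ≤ (e * γ) ^ 2 / 400 := by
    rw [Ex_lin', hl, list_sum]; exact hd₂
  have E4 : Ex l (fun x => ‖B x x‖ ^ 2) ≤ 3 := by
    have := Ex_quad B l 0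
    simp only [zero_add] at this
    refine this.trans ?_
    rw [hl, list_sum, list_sum]
    simp only [list_sum]
    have a1 : ‖∑ i, B (w i) (w i)‖ ≤ 1 := by
      have : ∑ i, B (w i) (w i) = b.lm (∑ i, w i * star (w i)) ζ := by
        rw [lm_sum]; exact Finset.sum_congr rfl fun i _ => (b.lm_mul _ _ _).symm
      rw [this]
      refine (b.norm_lm_one ?_ ζ).trans hζ
      exact (CStarAlgebra.norm_le_one_iff_of_nonneg _
        (Finset.sum_nonneg fun i _ => mul_star_self_nonneg _)).2 h₂
    have a2 : ∑ i, ∑ j, ‖B (w i) (w j)‖ ^ 2 ≤ 1 := by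
      rw [Finset.sum_comm]
      calc ∑ j, ∑ i, ‖B (w i) (w j)‖ ^ 2 ≤ ∑ j, ‖b.lm (star (w j)) ζ‖ ^ 2 :=
            Finset.sum_le_sum fun j _ => b.sum_lm_le h₁ (b.lm (star (w j)) ζ)
        _ ≤ ‖ζ‖ ^ 2 := b.sum_lm_star_le h₂ ζ
        _ ≤ 1 := by nlinarith [norm_nonneg ζ]
    nlinarith [norm_nonneg (∑ i, B (w i) (w i))]
  have heγ : 0 < (e * γ) ^ 2 := by positivity
  set F : A → ℝ := fun x => ‖H1 x‖ ^ 2 + ((-(γ / 12)) * ‖B x x‖ ^ 2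
      + (-(50 / (e ^ 2 * γ))) * (‖H2 x‖ ^ 2 + ‖H3 x‖ ^ 2)) with hF
  have EF : γ / 2 ≤ Ex l F := by
    rw [hF, Ex_add, Ex_add, Ex_mul, Ex_mul, Ex_add]
    have : 50 / (e ^ 2 * γ) * ((e * γ) ^ 2 / 400 + (e * γ) ^ 2 / 400) = γ / 4 := by
      field_simp; norm_num
    have hp : 0 < 50 / (e ^ 2 * γ) := by positivity
    nlinarith [mul_le_mul_of_nonneg_left (add_le_add E2 E3) hp.le]
  obtain ⟨x, hx⟩ := exists_Ex_le l F
  have hFx : γ / 2 ≤ ‖H1 x‖ ^ 2 + ((-(γ / 12)) * ‖B x x‖ ^ 2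
      + (-(50 / (e ^ 2 * γ))) * (‖H2 x‖ ^ 2 + ‖H3 x‖ ^ 2)) := EF.trans hx
  have hp : 0 < 50 / (e ^ 2 * γ) := by positivity
  have hBx : B x x = b.lm (x * star x) ζ := (b.lm_mul _ _ _).symm
  have hH1 : ‖H1 x‖ ^ 2 ≤ ‖B x x‖ := by
    have a1 : ‖H1 x‖ ≤ ‖b.lm (star x) ζ‖ := b.norm_lm_one hr _
    have a2 : ‖b.lm (star x) ζ‖ ^ 2 ≤ ‖B x x‖ := by
      rw [normsq_lm, star_star, hBx]
      exact (re_inner_le _ _).trans (mul_le_of_le_one_right (norm_nonneg _) hζ)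
    nlinarith [norm_nonneg (H1 x)]
  obtain ⟨k1, k2, k3, k4⟩ := rand_real hγ he (norm_nonneg (B x x)) (norm_nonneg (H2 x))
    (norm_nonneg (H3 x)) hH1 hFx
  exact ⟨x, k1, hBx ▸ k2, k3, k4⟩

lemma exists_Y {ι : Type*} [Fintype ι] (w : ι → A) (h₁ : ∑ i, star (w i) * w i ≤ 1)
    (h₂ : ∑ i, w i * star (w i) ≤ 1) {ξ η ζ : E} (hζ : ‖ζ‖ ≤ 1) {r : A} (hr : ‖r‖ ≤ 1)
    {γ e : ℝ} (hγ : 0 < γ) (hγ1 : γ ≤ 1) (he : 0 < e)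
    (hg : γ ≤ ∑ i, ‖b.lm r (b.lm (star (w i)) ζ)‖ ^ 2)
    (hd₁ : ∑ i, ‖b.lm (w i) ξ - b.rm (w i) η‖ ^ 2 ≤ (e * γ) ^ 2 / 400)
    (hd₂ : ∑ i, ‖b.lm (star (w i)) η - b.rm (star (w i)) ξ‖ ^ 2 ≤ (e * γ) ^ 2 / 400) :
    ∃ Y : A, ‖Y‖ ≤ 1 ∧ (γ ^ 5 / 18432) ≤ ‖b.lm r (b.lm (star Y) ζ)‖ ^ 2 ∧
      b.Int Y ξ η e ∧ b.Int (star Y) η ξ e := by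
  obtain ⟨x, x1, x2, x3, x4⟩ := b.randomize w h₁ h₂ hζ hr hγ hγ1 he hg hd₁ hd₂
  set t : ℝ := γ ^ 2 / 48 with ht
  have ht0 : 0 < t := by positivity
  have ht1 : t ≤ 1 := by rw [ht]; nlinarith
  obtain ⟨Y, Y1, Y2, Y3⟩ := b.trunc ((t : ℂ) • x)
  have hst : star ((t : ℂ) • x) = (t : ℂ) • star x := by simp [star_smul]
  have nt : ‖(t : ℂ)‖ = t := by rw [Complex.norm_real, Real.norm_of_nonneg ht0.le]
  have i1 : b.Int ((t : ℂ) • x) ξ η (e / 2) :=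
    (x3.smul (t : ℂ)).mono (by rw [nt]; nlinarith)
  have i2 : b.Int (star ((t : ℂ) • x)) η ξ (e / 2) := by
    rw [hst]; exact (x4.smul (t : ℂ)).mono (by rw [nt]; nlinarith)
  obtain ⟨y1, y2⟩ := Y3 ξ η _ _ i1 i2
  rw [add_halves] at y1 y2
  refine ⟨Y, Y1, ?_, y1, y2⟩
  have hY := Y2 ζ
  rw [hst, lm_smul, smul_mul_smul_comm, lm_smul, norm_smul, norm_mul, nt] at hY
  have hY' : ‖(t : ℂ) • b.lm r (b.lm (star x) ζ) - b.lm r (b.lm (star Y) ζ)‖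
      ≤ t * t * (12 / γ) := by
    rw [← map_smul, ← map_sub]
    exact (b.norm_lm_one hr _).trans (hY.trans (by gcongr))
  have h3 : t * ‖b.lm r (b.lm (star x) ζ)‖ - ‖b.lm r (b.lm (star Y) ζ)‖ ≤ t * t * (12 / γ) := by
    refine le_trans ?_ hY'
    refine le_trans ?_ (norm_sub_norm_le _ _)
    rw [norm_smul, nt]
  set P := ‖b.lm r (b.lm (star x) ζ)‖ with hP
  set Q := ‖b.lm r (b.lm (star Y) ζ)‖ with hQ
  have hP0 : 0 ≤ P := norm_nonneg _
  have hQ0 : 0 ≤ Q := norm_nonneg _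
  have h4 : t * t * (12 / γ) = t * (γ / 4) := by rw [ht]; field_simp; norm_num
  have h5 : γ / 2 ≤ P := by nlinarith
  have h6 : t * P / 2 ≤ Q := by nlinarith
  have h7 : γ ^ 5 / 18432 = t ^ 2 * (γ / 2) / 4 := by rw [ht]; ring
  rw [h7]
  have h8 : (t * P / 2) ^ 2 ≤ Q ^ 2 := by gcongr
  nlinarith [mul_le_mul_of_nonneg_left x1 (sq_nonneg t)]

end Bim
end AUE

namespace AUE

section
variable {E : Type*} [NormedAddCommGroup E] [InnerProductSpace ℂ E]

/-- The `ℓ²`-norm of a finite family of vectors. -/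
def N {ι : Type*} [Fintype ι] (f : ι → E) : ℝ := Real.sqrt (∑ i, ‖f i‖ ^ 2)

lemma N_nonneg {ι : Type*} [Fintype ι] (f : ι → E) : 0 ≤ N f := Real.sqrt_nonneg _
lemma N_sq {ι : Type*} [Fintype ι] (f : ι → E) : N f ^ 2 = ∑ i, ‖f i‖ ^ 2 :=
  Real.sq_sqrt (Finset.sum_nonneg fun _ _ => sq_nonneg _)
lemma N_eq {ι : Type*} [Fintype ι] (f : ι → E) :
    N f = ‖(WithLp.toLp 2 f : PiLp 2 (fun _ : ι => E))‖ := by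
  rw [PiLp.norm_eq_of_L2]; rfl
lemma N_add_le {ι : Type*} [Fintype ι] (f g : ι → E) : N (fun i => f i + g i) ≤ N f + N g := by
  rw [N_eq, N_eq, N_eq]
  exact norm_add_le (WithLp.toLp 2 f : PiLp 2 (fun _ : ι => E)) (WithLp.toLp 2 g)
lemma N_sub_comm {ι : Type*} [Fintype ι] (f g : ι → E) :
    N (fun i => f i - g i) = N (fun i => g i - f i) := by
  unfold N; simp only [norm_sub_rev]
lemma N_tri {ι : Type*} [Fintype ι] (f g : ι → E) : N f ≤ N g + N (fun i => f i - g i) := by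
  have := N_add_le g (fun i => f i - g i)
  simpa using this
lemma N_mono {ι : Type*} [Fintype ι] {f g : ι → E} (h : ∀ i, ‖f i‖ ≤ ‖g i‖) : N f ≤ N g :=
  Real.sqrt_le_sqrt (Finset.sum_le_sum fun i _ => by gcongr; exact h i)
lemma N_le_of_sq {ι : Type*} [Fintype ι] {f : ι → E} {c : ℝ} (hc : 0 ≤ c)
    (h : ∑ i, ‖f i‖ ^ 2 ≤ c ^ 2) : N f ≤ c := by
  rw [← N_sq] at h
  exact abs_le_of_sq_le_sq' h hc |>.2
end

namespace Bim
variable {A E : Type*} [CStarAlgebra A] [NormedAddCommGroup E] [InnerProductSpace ℂ E]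
    [CompleteSpace E] (b : Bim A E) [PartialOrder A] [StarOrderedRing A]

/-- A row/column contraction family approximately intertwining `ξ` and `η`. -/
structure Fam {I : Type*} [Fintype I] (w : I → A) (ξ η : E) (D : ℝ) : Prop where
  o1 : ∑ i, star (w i) * w i ≤ 1
  o2 : ∑ i, w i * star (w i) ≤ 1
  s1 : ∑ i, ‖b.lm (w i) ξ - b.rm (w i) η‖ ^ 2 ≤ D
  s2 : ∑ i, ‖b.lm (star (w i)) η - b.rm (star (w i)) ξ‖ ^ 2 ≤ D

variable {b}

lemma star_conj_le {x y : A} (h : x ≤ y) (c : A) : star c * x * c ≤ star c * y * c :=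
  star_left_conjugate_le_conjugate h c

lemma Fam.mul_o1 {I J : Type*} [Fintype I] [Fintype J] {p : I → A} {q : J → A}
    (hp : ∑ i, star (p i) * p i ≤ 1) (hq : ∑ i, star (q i) * q i ≤ 1) :
    ∑ z : I × J, star (p z.1 * q z.2) * (p z.1 * q z.2) ≤ 1 := by
  rw [Fintype.sum_prod_type_right]
  refine le_trans (Finset.sum_le_sum (g := fun j => star (q j) * q j) fun j _ => ?_) hq
  calc ∑ i, star (p i * q j) * (p i * q j) = star (q j) * (∑ i, star (p i) * p i) * q j := by
        rw [Finset.mul_sum, Finset.sum_mul]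
        exact Finset.sum_congr rfl fun i _ => by rw [star_mul]; noncomm_ring
    _ ≤ star (q j) * 1 * q j := star_conj_le hp _
    _ = _ := by rw [mul_one]

lemma Fam.mul_o2 {I J : Type*} [Fintype I] [Fintype J] {p : I → A} {q : J → A}
    (hp : ∑ i, p i * star (p i) ≤ 1) (hq : ∑ i, q i * star (q i) ≤ 1) :
    ∑ z : I × J, (p z.1 * q z.2) * star (p z.1 * q z.2) ≤ 1 := by
  have := Fam.mul_o1 (p := fun i => star (q i)) (q := fun i => star (p i))
    (by simpa using hq) (by simpa using hp)
  rw [Fintype.sum_prod_type_right] at this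
  rw [Fintype.sum_prod_type]
  simpa using this

lemma Fam.mul_s {I J : Type*} [Fintype I] [Fintype J] {p : I → A} {q : J → A}
    (hp : ∑ i, star (p i) * p i ≤ 1) (hq : ∑ i, q i * star (q i) ≤ 1) {ξ η ζ : E} {D₁ D₂ : ℝ}
    (h₁ : ∑ i, ‖b.lm (p i) η - b.rm (p i) ζ‖ ^ 2 ≤ D₁)
    (h₂ : ∑ i, ‖b.lm (q i) ξ - b.rm (q i) η‖ ^ 2 ≤ D₂) :
    ∑ z : I × J, ‖b.lm (p z.1 * q z.2) ξ - b.rm (p z.1 * q z.2) ζ‖ ^ 2 ≤ 2 * (D₁ + D₂) := by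
  have e : ∀ z : I × J, ‖b.lm (p z.1 * q z.2) ξ - b.rm (p z.1 * q z.2) ζ‖ ^ 2
      ≤ 2 * (‖b.lm (p z.1) (b.lm (q z.2) ξ - b.rm (q z.2) η)‖ ^ 2
        + ‖b.rm (q z.2) (b.lm (p z.1) η - b.rm (p z.1) ζ)‖ ^ 2) := by
    intro z
    have : b.lm (p z.1 * q z.2) ξ - b.rm (p z.1 * q z.2) ζ
      = b.lm (p z.1) (b.lm (q z.2) ξ - b.rm (q z.2) η)
        + b.rm (q z.2) (b.lm (p z.1) η - b.rm (p z.1) ζ) := by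
      rw [lm_mul, rm_mul, map_sub, map_sub, b.comm]; abel
    rw [this]
    exact norm_add_sq_le _ _
  refine (Finset.sum_le_sum fun z _ => e z).trans ?_
  rw [← Finset.mul_sum, Finset.sum_add_distrib]
  have a1 : ∑ z : I × J, ‖b.lm (p z.1) (b.lm (q z.2) ξ - b.rm (q z.2) η)‖ ^ 2 ≤ D₂ := by
    rw [Fintype.sum_prod_type_right]
    have h : ∀ j, ∑ i, ‖b.lm (p i) (b.lm (q j) ξ - b.rm (q j) η)‖ ^ 2
        ≤ ‖b.lm (q j) ξ - b.rm (q j) η‖ ^ 2 := fun j => b.sum_lm_le hp _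
    exact le_trans (Finset.sum_le_sum fun j _ => h j) h₂
  have a2 : ∑ z : I × J, ‖b.rm (q z.2) (b.lm (p z.1) η - b.rm (p z.1) ζ)‖ ^ 2 ≤ D₁ := by
    rw [Fintype.sum_prod_type]
    have h : ∀ i, ∑ j, ‖b.rm (q j) (b.lm (p i) η - b.rm (p i) ζ)‖ ^ 2
        ≤ ‖b.lm (p i) η - b.rm (p i) ζ‖ ^ 2 := fun i => b.sum_rm_le hq _
    exact le_trans (Finset.sum_le_sum fun i _ => h i) h₁
  linarith

lemma Fam.mul {I J : Type*} [Fintype I] [Fintype J] {p : I → A} {q : J → A} {ξ η ζ : E}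
    {D₁ D₂ : ℝ} (hp : b.Fam p η ζ D₁) (hq : b.Fam q ξ η D₂) :
    b.Fam (fun z : I × J => p z.1 * q z.2) ξ ζ (2 * (D₁ + D₂)) := by
  refine ⟨Fam.mul_o1 hp.o1 hq.o1, Fam.mul_o2 hp.o2 hq.o2, Fam.mul_s hp.o1 hq.o2 hp.s1 hq.s1, ?_⟩
  have := Fam.mul_s (b := b) (p := fun i => star (q i)) (q := fun i => star (p i))
    (by simpa using hq.o2) (by simpa using hp.o1) hq.s2 hp.s2
  rw [Fintype.sum_prod_type_right] at this
  rw [Fintype.sum_prod_type, add_comm D₁]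
  simpa only [star_mul] using this

lemma Fam.mono {I : Type*} [Fintype I] {w : I → A} {ξ η : E} {D D' : ℝ} (h : b.Fam w ξ η D)
    (hD : D ≤ D') : b.Fam w ξ η D' := ⟨h.o1, h.o2, h.s1.trans hD, h.s2.trans hD⟩

lemma star_mul_le_one {c : A} (h : ‖c‖ ≤ 1) : star c * c ≤ 1 := by
  refine (CStarAlgebra.norm_le_one_iff_of_nonneg (star c * c) (star_mul_self_nonneg c)).1 ?_
  rw [CStarRing.norm_star_mul_self]; nlinarith [norm_nonneg c]
lemma mul_star_le_one {c : A} (h : ‖c‖ ≤ 1) : c * star c ≤ 1 := by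
  have := star_mul_le_one (c := star c) (by rwa [norm_star])
  rwa [star_star] at this

lemma Fam.single {c : A} (hc : ‖c‖ ≤ 1) {ξ η : E} {τ : ℝ} (h₁ : b.Int c ξ η τ)
    (h₂ : b.Int (star c) η ξ τ) : b.Fam (fun _ : Unit => c) ξ η (τ ^ 2) := by
  unfold Int at *
  refine ⟨by simpa using star_mul_le_one hc, by simpa using mul_star_le_one hc, ?_, ?_⟩
  · simpa using pow_le_pow_left₀ (norm_nonneg _) h₁ 2
  · simpa using pow_le_pow_left₀ (norm_nonneg _) h₂ 2

/-- transfer map -/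
def T {ι : Type*} [Fintype ι] (a : ι → A) (y : A) : A := ∑ j, a j * y * star (a j)

/-- the walk -/
def X {ι : Type*} [Fintype ι] (a : ι → A) (v r : A) : ℕ → A
  | 0 => r * r
  | i + 1 => star v * T a (X a v r i) * v

section T
variable {ι : Type*} [Fintype ι] (a : ι → A)
lemma T_mono {x y : A} (h : x ≤ y) : T a x ≤ T a y :=
  Finset.sum_le_sum fun j _ => by
    have := star_conj_le h (star (a j)); rwa [star_star] at this
lemma T_zero : T a 0 = 0 := by simp [T]
lemma T_add (x y : A) : T a (x + y) = T a x + T a y := by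
  simp [T, mul_add, add_mul, Finset.sum_add_distrib]
lemma T_sum (s : Finset ℕ) (x : ℕ → A) : T a (∑ i ∈ s, x i) = ∑ i ∈ s, T a (x i) :=
  map_sum (AddMonoidHom.mk' (T a) (T_add a)) x s
lemma T_nonneg {x : A} (h : 0 ≤ x) : 0 ≤ T a x := by
  have := T_mono a h; rwa [T_zero] at this
lemma T_le_one (ha : ∑ j, a j * star (a j) ≤ 1) {x : A} (h : x ≤ 1) : T a x ≤ 1 :=
  (T_mono a h).trans (by simpa [T] using ha)

lemma X_nonneg (v : A) {r : A} (hr : star r = r) : ∀ i, 0 ≤ X a v r i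
  | 0 => by
    have := star_mul_self_nonneg r
    rwa [hr] at this
  | i + 1 => star_left_conjugate_nonneg (T_nonneg a (X_nonneg v hr i)) v

lemma X_sum_le (ha : ∑ j, a j * star (a j) ≤ 1) {v r : A}
    (hr2 : r * r ≤ 1 - star v * v) : ∀ m, ∑ i ∈ Finset.range m, X a v r i ≤ 1
  | 0 => by simp
  | m + 1 => by
    rw [Finset.sum_range_succ']
    have h := X_sum_le ha hr2 m
    have e : ∑ i ∈ Finset.range m, X a v r (i + 1)
        = star v * T a (∑ i ∈ Finset.range m, X a v r i) * v := by
      rw [T_sum, Finset.mul_sum, Finset.sum_mul]; rfl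
    rw [e]
    calc _ ≤ star v * 1 * v + (1 - star v * v) := add_le_add (star_conj_le (T_le_one a ha h) v) hr2
      _ = 1 := by rw [mul_one]; abel

lemma X_le_one (ha : ∑ j, a j * star (a j) ≤ 1) {v r : A} (hr : star r = r)
    (hr2 : r * r ≤ 1 - star v * v) (i : ℕ) : X a v r i ≤ 1 :=
  (Finset.single_le_sum (f := X a v r) (fun i _ => X_nonneg a v hr i)
    (Finset.self_mem_range_succ i)).trans (X_sum_le a ha hr2 (i + 1))
end T

lemma exists_factor {x : A} (h0 : 0 ≤ x) (h1 : x ≤ 1) : ∃ c : A, x = star c * c ∧ ‖c‖ ≤ 1 := by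
  obtain ⟨c, rfl⟩ := CStarAlgebra.nonneg_iff_eq_star_mul_self.1 h0
  exact ⟨c, rfl, norm_le_one_of h1⟩

lemma words {ι : Type} [Fintype ι] {a : ι → A} {ξ η : E} {τ : ℝ} {v r : A}
    (ha : b.Fam a ξ η (τ ^ 2)) (hv : ‖v‖ ≤ 1) (h₁ : b.Int v ξ η τ) (h₂ : b.Int (star v) η ξ τ) :
    ∀ i : ℕ, ∃ (I : Type) (_ : Fintype I) (w : I → A), b.Fam w ξ η (10 ^ i * τ ^ 2) ∧
      T a (X a v r i) = ∑ k, w k * (r * r) * star (w k)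
  | 0 => ⟨ι, inferInstance, a, by simpa using ha, rfl⟩
  | i + 1 => by
    obtain ⟨I, _, w, hw, he⟩ := words (r := r) ha hv h₁ h₂ i
    have hvf : b.Fam (fun _ : Unit => star v) η ξ (τ ^ 2) :=
      Fam.single (by rwa [norm_star]) h₂ (by rwa [star_star])
    refine ⟨(ι × Unit) × I, inferInstance, _, ((ha.mul hvf).mul hw).mono ?_, ?_⟩
    · have : (1 : ℝ) ≤ 10 ^ i := one_le_pow₀ (by norm_num)
      have e : (10 : ℝ) ^ (i + 1) = 10 * 10 ^ i := pow_succ' _ _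
      rw [e]
      have := mul_le_mul_of_nonneg_right this (sq_nonneg τ)
      linarith
    · rw [Fintype.sum_prod_type, Fintype.sum_prod_type]
      simp only [Finset.univ_unique, Finset.sum_singleton]
      change ∑ j, a j * (star v * T a (X a v r i) * v) * star (a j) = _
      refine Finset.sum_congr rfl fun j _ => ?_
      rw [he, Finset.mul_sum, Finset.sum_mul, Finset.mul_sum, Finset.sum_mul]
      refine Finset.sum_congr rfl fun k _ => ?_
      simp only [star_mul, star_star]
      noncomm_ring

lemma sub_sq_le {p q τ : ℝ} (hp : 0 ≤ p) (hq : 0 ≤ q) (hq1 : q ≤ 1) (h : q ≤ p + τ) (hτ : 0 ≤ τ) :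
    q ^ 2 - 2 * τ ≤ p ^ 2 := by
  rcases le_total τ q with h' | h'
  · nlinarith [pow_le_pow_left₀ (sub_nonneg.2 h') (by linarith : q - τ ≤ p) 2]
  · nlinarith

lemma step_T {ι : Type*} [Fintype ι] {a : ι → A} {ξ η : E} {τ : ℝ} (hτ : 0 ≤ τ)
    (ha : b.Fam a ξ η (τ ^ 2)) (hξ : ‖ξ‖ = 1)
    (h3 : ‖b.rm (1 - ∑ j, star (a j) * a j) ξ‖ ≤ τ) {x : A} (h0 : 0 ≤ x) (h1 : x ≤ 1) :
    (inner ℂ (b.lm x ξ) ξ).re - 3 * τ ≤ (inner ℂ (b.lm (T a x) η) η).re := by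
  obtain ⟨c, rfl, hc⟩ := exists_factor h0 h1
  set P : ι → E := fun j => b.lm c (b.lm (star (a j)) η)
  set Q : ι → E := fun j => b.lm c (b.rm (star (a j)) ξ)
  have e1 : (inner ℂ (b.lm (T a (star c * c)) η) η).re = N P ^ 2 := by
    rw [N_sq, T, lm_sum, sum_inner, Complex.re_sum]
    refine Finset.sum_congr rfl fun j _ => ?_
    have := b.normsq_lm (c * star (a j)) η
    rw [lm_mul] at this
    rw [this, star_mul, star_star]
    congr 4; noncomm_ring
  have n1 : ‖b.lm c ξ‖ ≤ 1 := hξ ▸ b.norm_lm_one hc ξ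
  have e2 : N Q ^ 2 = ‖b.lm c ξ‖ ^ 2
      - (inner ℂ (b.lm c (b.rm (1 - ∑ j, star (a j) * a j) ξ)) (b.lm c ξ)).re := by
    rw [b.comm, rm_sub, rm_one, inner_sub_left, Complex.sub_re, re_inner_self]
    have := b.sum_rm_eq (fun j => star (a j)) (b.lm c ξ)
    simp only [star_star] at this
    rw [← this, N_sq]
    simp only [Q, b.comm]
    ring
  have e3 : (inner ℂ (b.lm c (b.rm (1 - ∑ j, star (a j) * a j) ξ)) (b.lm c ξ)).re ≤ τ := by
    have t1 := re_inner_le (b.lm c (b.rm (1 - ∑ j, star (a j) * a j) ξ)) (b.lm c ξ)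
    have t2 := (b.norm_lm_one hc (b.rm (1 - ∑ j, star (a j) * a j) ξ)).trans h3
    have t3 := norm_nonneg (b.lm c (b.rm (1 - ∑ j, star (a j) * a j) ξ))
    nlinarith [norm_nonneg (b.lm c ξ)]
  have hQ1 : N Q ≤ 1 := by
    refine N_le_of_sq zero_le_one ?_
    have := b.sum_rm_star_le ha.o1 (b.lm c ξ)
    simp only [Q, b.comm]
    nlinarith [norm_nonneg (b.lm c ξ)]
  have hPQ : N Q ≤ N P + τ := by
    refine (N_tri Q P).trans (add_le_add le_rfl (N_le_of_sq hτ ?_))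
    refine le_trans (Finset.sum_le_sum fun j _ => ?_) ha.s2
    gcongr 
    simp only [P, Q]
    rw [← map_sub, norm_sub_rev]
    rw [norm_sub_rev]
    refine (b.norm_lm_one hc _).trans_eq (norm_sub_rev _ _)
  have := sub_sq_le (N_nonneg P) (N_nonneg Q) hQ1 hPQ hτ
  rw [← normsq_lm, e1]
  linarith

lemma step_v {v : A} {ξ η : E} {τ : ℝ} (hτ : 0 ≤ τ) (hη : ‖η‖ = 1) (hv : ‖v‖ ≤ 1)
    (h₁ : b.Int v ξ η τ) (h₂ : b.Int (star v) η ξ τ) {y : A} (h0 : 0 ≤ y) (h1 : y ≤ 1) {g : ℝ}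
    (hg : 0 ≤ g)
    (hy : (inner ℂ (b.lm y (b.lm (1 - v * star v) η)) (b.lm (1 - v * star v) η)).re ≤ g ^ 2) :
    (inner ℂ (b.lm y η) η).re - (g + 4 * τ) ≤ (inner ℂ (b.lm (star v * y * v) ξ) ξ).re := by
  have hs : b.Int (1 - v * star v) η η (τ + τ) :=
    (Int.mul (by rwa [norm_star]) hv h₁ h₂).one_sub
  unfold Int at *
  obtain ⟨c, rfl, hc⟩ := exists_factor h0 h1
  rw [← normsq_lm] at hy
  have hy' : ‖b.lm c (b.lm (1 - v * star v) η)‖ ≤ g := abs_le_of_sq_le_sq' hy hg |>.2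
  have e1 : (inner ℂ (b.lm (star v * (star c * c) * v) ξ) ξ).re = ‖b.lm c (b.lm v ξ)‖ ^ 2 := by
    rw [← lm_mul, normsq_lm, star_mul]; congr 4; noncomm_ring
  have n1 : ‖b.lm c η‖ ≤ 1 := hη ▸ b.norm_lm_one hc η
  have e2 : ‖b.lm c (b.rm v η)‖ ^ 2 = ‖b.lm c η‖ ^ 2
      - (inner ℂ (b.lm c (b.rm (1 - v * star v) η)) (b.lm c η)).re := by
    rw [b.comm, b.comm, normsq_rm, rm_sub, rm_one, inner_sub_left, Complex.sub_re, re_inner_self]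
    ring
  have e3 : ‖b.lm c (b.rm (1 - v * star v) η)‖ ≤ g + (τ + τ) := by
    have : b.lm c (b.rm (1 - v * star v) η) = b.lm c (b.lm (1 - v * star v) η)
      - b.lm c (b.lm (1 - v * star v) η - b.rm (1 - v * star v) η) := by
      rw [map_sub]; abel
    rw [this]
    exact (norm_sub_le _ _).trans (add_le_add hy' ((b.norm_lm_one hc _).trans hs))
  have e4 := re_inner_le (b.lm c (b.rm (1 - v * star v) η)) (b.lm c η)
  have e5 : ‖b.lm c (b.rm v η)‖ ≤ 1 := by
    refine (b.norm_lm_one hc _).trans ?_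
    exact hη ▸ b.norm_rm_one hv η
  have e6 : ‖b.lm c (b.rm v η)‖ ≤ ‖b.lm c (b.lm v ξ)‖ + τ := by
    have h'' : ‖b.lm c (b.rm v η - b.lm v ξ)‖ ≤ τ := by
      refine (b.norm_lm_one hc _).trans ?_
      rwa [norm_sub_rev]
    have h3 := norm_sub_norm_le (b.lm c (b.rm v η)) (b.lm c (b.lm v ξ))
    rw [← map_sub] at h3
    linarith
  have := sub_sq_le (norm_nonneg _) (norm_nonneg _) e5 e6 hτ
  rw [← normsq_lm, e1]
  have t3 := norm_nonneg (b.lm c (b.rm (1 - v * star v) η))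
  nlinarith [norm_nonneg (b.lm c η)]

/-- The walk lemma. -/
lemma walk {ι : Type} [Fintype ι] {a : ι → A} {ξ η : E} {τ β : ℝ} {v : A} (hτ : 0 ≤ τ)
    (ha : b.Fam a ξ η (τ ^ 2)) (hξ : ‖ξ‖ = 1) (hη : ‖η‖ = 1)
    (h3 : ‖b.rm (1 - ∑ j, star (a j) * a j) ξ‖ ≤ τ)
    (hv : ‖v‖ ≤ 1) (h₁ : b.Int v ξ η τ) (h₂ : b.Int (star v) η ξ τ)
    (hβ : 0 < β) (hβr : β ≤ ‖b.lm (1 - star v * v) ξ‖ ^ 2) {m : ℕ} (hm : 2 < m * β)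
    (hτm : 7 * τ ≤ β / (4 * m)) :
    ∃ (I : Type) (_ : Fintype I) (w : I → A), b.Fam w ξ η (10 ^ m * τ ^ 2) ∧
      (β / (4 * m)) ^ 2 ≤ ∑ k, ‖b.lm (1 - star v * v) (b.lm (star (w k))
        (b.lm (1 - v * star v) η))‖ ^ 2 := by
  set r := 1 - star v * v with hr
  set ζ := b.lm (1 - v * star v) η with hζ
  have hm0 : (0 : ℝ) < m := by
    by_contra h
    push Not at h
    nlinarith
  set g := β / (4 * m) with hg
  have hg0 : 0 < g := by positivity
  have hgm : g * m = β / 4 := by rw [hg]; field_simp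
  have rs : star r = r := by simp [hr]
  have r0 : 0 ≤ r := sub_nonneg.2 (star_mul_le_one hv)
  have r1 : r ≤ 1 := sub_le_self _ (star_mul_self_nonneg v)
  have rr : r * r ≤ r := by
    have h := star_left_conjugate_nonneg r0 (1 - r)
    have h' := star_left_conjugate_nonneg (sub_nonneg.2 r1) r
    have e : r - r * r = star (1 - r) * r * (1 - r) + star r * (1 - r) * r := by
      rw [star_sub, star_one, rs]; noncomm_ring
    rw [← sub_nonneg, e]; exact add_nonneg h h'
  by_contra hcon
  have hsmall : ∀ i < m, (inner ℂ (b.lm (T a (X a v r i)) ζ) ζ).re ≤ g ^ 2 := by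
    intro i hi
    by_contra hlt
    push Not at hlt
    obtain ⟨I, _, w, hw, he⟩ := words (r := r) ha hv h₁ h₂ i
    refine hcon ⟨I, inferInstance, w, hw.mono ?_, ?_⟩
    · gcongr
      norm_num
    · refine hlt.le.trans_eq ?_
      rw [he, lm_sum, sum_inner, Complex.re_sum]
      refine Finset.sum_congr rfl fun k _ => ?_
      have := b.normsq_lm (r * star (w k)) ζ
      rw [lm_mul, star_mul, star_star, rs] at this
      rw [this]
      congr 4; noncomm_ring
  have hX0 := X_nonneg a v rs
  have hX1 := X_le_one a ha.o2 rs rr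
  have key : ∀ i ≤ m, β - i * (g + 7 * τ) ≤ (inner ℂ (b.lm (X a v r i) ξ) ξ).re := by
    intro i
    induction i with
    | zero =>
      intro _
      have : ‖b.lm r ξ‖ ^ 2 = (inner ℂ (b.lm (X a v r 0) ξ) ξ).re := by
        rw [normsq_lm, rs]; rfl
      rw [← this]; simpa using hβr
    | succ i ih =>
      intro hi
      have k1 := ih (by omega)
      have k2 := step_T hτ ha hξ h3 (hX0 i) (hX1 i)
      have k3 := step_v hτ hη hv h₁ h₂ (T_nonneg a (hX0 i)) (T_le_one a ha.o2 (hX1 i)) hg0.le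
        (hsmall i (by omega))
      change _ ≤ (inner ℂ (b.lm (star v * T a (X a v r i) * v) ξ) ξ).re
      push_cast
      linarith
  have hsum := b.re_lm_mono (X_sum_le a ha.o2 rr m) ξ
  rw [lm_one, re_inner_self, hξ, lm_sum, sum_inner, Complex.re_sum] at hsum
  have hlow : ∑ i ∈ Finset.range m, β / 2 ≤
      ∑ i ∈ Finset.range m, (inner ℂ (b.lm (X a v r i) ξ) ξ).re := by
    refine Finset.sum_le_sum fun i hi => ?_
    have him := Finset.mem_range.1 hi
    refine le_trans ?_ (key i him.le)
    have : (i : ℝ) ≤ m := by exact_mod_cast him.le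
    have : (i : ℝ) * (g + 7 * τ) ≤ m * (g + g) := by gcongr
    linarith
  rw [Finset.sum_const, Finset.card_range, nsmul_eq_mul] at hlow
  linarith

end Bim
end AUE

namespace AUE
namespace Bim

lemma row_col {A : Type*} [CStarAlgebra A] [PartialOrder A] [StarOrderedRing A]
    {p₁ p₂ q₁ q₂ : A} (hp : p₁ * star p₁ + p₂ * star p₂ ≤ 1)
    (hq : star q₁ * q₁ + star q₂ * q₂ ≤ 1) : ‖p₁ * q₁ + p₂ * q₂‖ ≤ 1 := by
  let x : WithCStarModule A (A × A) := (WithCStarModule.equiv A (A × A)).symm (star q₁, star q₂)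
  let y : WithCStarModule A (A × A) := (WithCStarModule.equiv A (A × A)).symm (p₁, p₂)
  have h := CStarModule.norm_inner_le (A := A) (WithCStarModule A (A × A)) (x := x) (y := y)
  have e : inner A x y = p₁ * q₁ + p₂ * q₂ := by
    rw [WithCStarModule.prod_inner]
    simp [x, y, WithCStarModule.inner_def]
  have hx : ‖x‖ ^ 2 ≤ 1 := by
    rw [WithCStarModule.prod_norm_sq]
    refine (CStarAlgebra.norm_le_one_iff_of_nonneg _ ?_).2 ?_
    · simp only [WithCStarModule.inner_def]
      exact add_nonneg (mul_star_self_nonneg _) (mul_star_self_nonneg _)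
    · simpa [x, WithCStarModule.inner_def] using hq
  have hy : ‖y‖ ^ 2 ≤ 1 := by
    rw [WithCStarModule.prod_norm_sq]
    refine (CStarAlgebra.norm_le_one_iff_of_nonneg _ ?_).2 ?_
    · simp only [WithCStarModule.inner_def]
      exact add_nonneg (mul_star_self_nonneg _) (mul_star_self_nonneg _)
    · simpa [y, WithCStarModule.inner_def] using hp
  rw [e] at h
  have hx0 : 0 ≤ ‖x‖ := by rw [WithCStarModule.prod_norm]; exact Real.sqrt_nonneg _
  have hy0 : 0 ≤ ‖y‖ := by rw [WithCStarModule.prod_norm]; exact Real.sqrt_nonneg _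
  nlinarith

variable {A E : Type*} [CStarAlgebra A] [NormedAddCommGroup E] [InnerProductSpace ℂ E]
    [CompleteSpace E] {b : Bim A E} [PartialOrder A] [StarOrderedRing A]

lemma sq_le_self {r : A} (r0 : 0 ≤ r) (r1 : r ≤ 1) : r * r ≤ r := by
  have rs : star r = r := (IsSelfAdjoint.of_nonneg r0).star_eq
  have h := star_left_conjugate_nonneg r0 (1 - r)
  have h' := star_left_conjugate_nonneg (sub_nonneg.2 r1) r
  have e : r - r * r = star (1 - r) * r * (1 - r) + star r * (1 - r) * r := by
    rw [star_sub, star_one, rs]; noncomm_ring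
  rw [← sub_nonneg, e]; exact add_nonneg h h'

lemma new_contr {v Y : A} (hv : ‖v‖ ≤ 1) (hY : ‖Y‖ ≤ 1) :
    ‖v * star v * v + (1 - v * star v) * Y * (1 - star v * v)‖ ≤ 1 := by
  have r0 : 0 ≤ 1 - star v * v := sub_nonneg.2 (star_mul_le_one hv)
  have r1 : 1 - star v * v ≤ 1 := sub_le_self _ (star_mul_self_nonneg v)
  have s0 : 0 ≤ 1 - v * star v := sub_nonneg.2 (mul_star_le_one hv)
  have s1 : 1 - v * star v ≤ 1 := sub_le_self _ (mul_star_self_nonneg v)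
  rw [mul_assoc v, mul_assoc (1 - v * star v)]
  have rs : star (1 - star v * v) = 1 - star v * v := by simp
  have ss : star (1 - v * star v) = 1 - v * star v := by simp
  refine row_col ?_ ?_
  · rw [ss]
    calc _ ≤ v * star v + (1 - v * star v) := by gcongr; exact sq_le_self s0 s1
      _ = 1 := by abel
  · have e1 : star (star v * v) * (star v * v) ≤ star v * v := by
      have := sq_le_self (star_mul_self_nonneg v) (star_mul_le_one hv)
      rwa [star_mul, star_star]
    have e2 : star (Y * (1 - star v * v)) * (Y * (1 - star v * v)) ≤ 1 - star v * v := by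
      calc _ = star (1 - star v * v) * (star Y * Y) * (1 - star v * v) := by
              rw [star_mul]; noncomm_ring
        _ ≤ star (1 - star v * v) * 1 * (1 - star v * v) := star_conj_le (star_mul_le_one hY) _
        _ ≤ _ := by rw [mul_one, rs]; exact sq_le_self r0 r1
    calc _ ≤ star v * v + (1 - star v * v) := add_le_add e1 e2
      _ = 1 := by abel

/-- One improvement step given the vector `Y`. -/
lemma improve_step {v Y : A} {ξ η : E} {τ e g : ℝ} (hτ : 0 ≤ τ) (he : 0 ≤ e) (hg0 : 0 ≤ g)
    (hv : ‖v‖ ≤ 1) (hY : ‖Y‖ ≤ 1)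
    (h₁ : b.Int v ξ η τ) (h₂ : b.Int (star v) η ξ τ)
    (y₁ : b.Int Y ξ η e) (y₂ : b.Int (star Y) η ξ e)
    (hg : g ≤ ‖b.lm (1 - star v * v) (b.lm (star Y) (b.lm (1 - v * star v) η))‖ ^ 2) :
    ∃ v' : A, ‖v'‖ ≤ 1 ∧ b.Int v' ξ η (7 * τ + e) ∧ b.Int (star v') η ξ (7 * τ + e) ∧
      ‖b.lm (star v) η‖ ^ 2 + g / 4 ≤ ‖b.lm (star v') η‖ ^ 2 := by
  have hv' : ‖star v‖ ≤ 1 := by rwa [norm_star]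
  have hY' : ‖star Y‖ ≤ 1 := by rwa [norm_star]
  have r0 : 0 ≤ 1 - star v * v := sub_nonneg.2 (star_mul_le_one hv)
  have r1 : 1 - star v * v ≤ 1 := sub_le_self _ (star_mul_self_nonneg v)
  have s0 : 0 ≤ 1 - v * star v := sub_nonneg.2 (mul_star_le_one hv)
  have s1 : 1 - v * star v ≤ 1 := sub_le_self _ (mul_star_self_nonneg v)
  have hr : ‖1 - star v * v‖ ≤ 1 := (CStarAlgebra.norm_le_one_iff_of_nonneg _ r0).2 r1
  have hs : ‖1 - v * star v‖ ≤ 1 := (CStarAlgebra.norm_le_one_iff_of_nonneg _ s0).2 s1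
  have rs : star (1 - star v * v) = 1 - star v * v := by simp
  have ss : star (1 - v * star v) = 1 - v * star v := by simp
  have nmul : ∀ {x y : A}, ‖x‖ ≤ 1 → ‖y‖ ≤ 1 → ‖x * y‖ ≤ 1 := fun {x y} hx hy =>
    (norm_mul_le x y).trans (by nlinarith [norm_nonneg x, norm_nonneg y])
  have ivv : b.Int (v * star v) η η (τ + τ) := Int.mul hv' hv h₁ h₂
  have ivv' : b.Int (star v * v) ξ ξ (τ + τ) := Int.mul hv hv' h₂ h₁
  have i3 : b.Int (v * star v * v) ξ η (3 * τ) :=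
    (Int.mul hv (nmul hv hv') ivv h₁).mono (by linarith)
  have i3' : b.Int (star v * v * star v) η ξ (3 * τ) :=
    (Int.mul hv' (nmul hv' hv) ivv' h₂).mono (by linarith)
  set κ : ℝ := (inner ℂ (b.lm (v * star v * (1 - v * star v)) η) η).re with hκ
  by_cases hcase : g / 4 ≤ κ
  · have h3 : ∀ x : A, (3 : ℂ) • x = 3 • x := fun x => ofNat_smul_eq_nsmul ℂ 3 x
    have h4 : ∀ x : A, (4 : ℂ) • x = 4 • x := fun x => ofNat_smul_eq_nsmul ℂ 4 x
    have c4 : (4⁻¹ : ℂ) * 4 = 1 := by norm_num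
    set v₁ : A := (2⁻¹ : ℂ) • ((3 : ℂ) • v - v * star v * v) with hv₁
    have sv₁ : star v₁ = (2⁻¹ : ℂ) • ((3 : ℂ) • star v - star v * v * star v) := by
      rw [hv₁, star_smul, star_sub, star_smul, star_mul, star_mul, star_star, mul_assoc]
      simp
    have hmul : (4 : ℂ) • (v₁ * star v₁) = (3 • v - v * star v * v) * (3 • star v - star v * v * star v) := by
      rw [sv₁, hv₁, smul_mul_smul_comm, smul_smul, h3, h3]
      norm_num
    have e1 : v₁ * star v₁ = 1 - (4⁻¹ : ℂ) • ((1 - v * star v) * (3 + (1 - v * star v)) * (1 - v * star v)) := by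
      have : (4 : ℂ) • (v₁ * star v₁) = (4 : ℂ) • (1 : A) - ((1 - v * star v) * (3 + (1 - v * star v)) * (1 - v * star v)) := by
        rw [hmul, h4]
        noncomm_ring
      have h2 := congrArg (fun z => (4⁻¹ : ℂ) • z) this
      simpa only [smul_sub, smul_smul, c4, one_smul] using h2
    have e2 : v₁ * star v₁ = v * star v + v * star v * (1 - v * star v)
        + (4⁻¹ : ℂ) • ((1 - v * star v) * v * star ((1 - v * star v) * v)) := by
      have : (4 : ℂ) • (v₁ * star v₁) = (4 : ℂ) • (v * star v + v * star v * (1 - v * star v))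
          + (1 - v * star v) * v * star ((1 - v * star v) * v) := by
        rw [hmul, star_mul, ss]
        rw [h4]
        noncomm_ring
      have h2 := congrArg (fun z => (4⁻¹ : ℂ) • z) this
      simpa only [smul_add, smul_smul, c4, one_smul] using h2
    have q4 : ∀ {z : A}, 0 ≤ z → 0 ≤ (4⁻¹ : ℂ) • z := by
      intro z hz
      have : (4⁻¹ : ℂ) • z = (4⁻¹ : ℝ) • z := by
        rw [← Complex.coe_smul]; norm_num
      rw [this]
      exact smul_nonneg (by norm_num) hz
    refine ⟨v₁, ?_, ?_, ?_, ?_⟩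
    · rw [← norm_star]
      refine norm_le_one_of ?_
      rw [star_star, e1]
      refine sub_le_self _ (q4 ?_)
      have := star_left_conjugate_nonneg (add_nonneg (by norm_num : (0 : A) ≤ 3) s0) (1 - v * star v)
      rwa [ss] at this
    · refine ((((h₁.smul (3 : ℂ)).add i3.neg)).smul (2⁻¹ : ℂ)).mono ?_ |> fun h => by
        simpa only [← sub_eq_add_neg] using h
      norm_num
      linarith
    · rw [sv₁]
      refine ((((h₂.smul (3 : ℂ)).add i3'.neg)).smul (2⁻¹ : ℂ)).mono ?_ |> fun h => by
        simpa only [← sub_eq_add_neg] using h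
      norm_num
      linarith
    · rw [normsq_lm, normsq_lm, star_star, star_star, e2, lm_add, lm_add, inner_add_left,
        inner_add_left, Complex.add_re, Complex.add_re]
      have := b.re_lm_nonneg (q4 (mul_star_self_nonneg ((1 - v * star v) * v))) η
      linarith
  · push Not at hcase
    have hd : ∀ Z : A, ‖Z‖ ≤ 1 → b.Int Z ξ η e → b.Int (star Z) η ξ e →
        (‖v * star v * v + (1 - v * star v) * Z * (1 - star v * v)‖ ≤ 1 ∧
        b.Int (v * star v * v + (1 - v * star v) * Z * (1 - star v * v)) ξ η (7 * τ + e) ∧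
        b.Int (star (v * star v * v + (1 - v * star v) * Z * (1 - star v * v))) η ξ (7 * τ + e)) := by
      intro Z hZ z1 z2
      have hZ' : ‖star Z‖ ≤ 1 := by rwa [norm_star]
      refine ⟨new_contr hv hZ, ?_, ?_⟩
      · exact (i3.add (Int.mul hr (nmul hs hZ) (Int.mul hZ hs ivv.one_sub z1) ivv'.one_sub)).mono
          (by linarith)
      · have : star (v * star v * v + (1 - v * star v) * Z * (1 - star v * v))
          = star v * v * star v + (1 - star v * v) * star Z * (1 - v * star v) := by
          rw [star_add, star_mul _ (1 - star v * v), star_mul _ Z, rs, ss, star_mul, star_mul, star_star, mul_assoc, mul_assoc]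
        rw [this]
        exact (i3'.add (Int.mul hs (nmul hr hZ') (Int.mul hZ' hr ivv'.one_sub z2) ivv.one_sub)).mono
          (by linarith)
    set C := b.lm (star v * v * star v) η with hC
    set D := b.lm (1 - star v * v) (b.lm (star Y) (b.lm (1 - v * star v) η)) with hD
    have f1 : b.lm (star (v * star v * v + (1 - v * star v) * Y * (1 - star v * v))) η = C + D := by
      rw [star_add, star_mul _ (1 - star v * v), star_mul _ Y, rs, ss, star_mul, star_mul, star_star,
        lm_add, lm_mul _ (1 - star v * v), lm_mul _ (star Y), ← mul_assoc]
    have f2 : b.lm (star (v * star v * v + (1 - v * star v) * (-Y) * (1 - star v * v))) η = C - D := by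
      rw [star_add, star_mul _ (1 - star v * v), star_mul _ (-Y), rs, ss, star_mul, star_mul, star_star,
        lm_add, lm_mul _ (1 - star v * v), lm_mul _ (star (-Y)), ← mul_assoc, star_neg, lm_neg, map_neg,
        ← sub_eq_add_neg]
    have hpal := pal C D
    have hCn : ‖b.lm (star v) η‖ ^ 2 - 2 * κ ≤ ‖C‖ ^ 2 := by
      have : ‖C‖ ^ 2 = ‖b.lm (star v) η‖ ^ 2 - 2 * κ
          + ‖b.lm (star ((1 - v * star v) * v)) η‖ ^ 2 := by
        rw [hC, normsq_lm, normsq_lm, normsq_lm, hκ, star_star, star_star]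
        have : star (star v * v * star v) * (star v * v * star v) = v * star v -
          (v * star v * (1 - v * star v) + v * star v * (1 - v * star v)) + (1 - v * star v) * v * star ((1 - v * star v) * v) := by
          rw [star_mul _ v, ss]; simp only [star_mul, star_star]; noncomm_ring
        rw [this, lm_add, lm_sub, lm_add]
        simp only [inner_add_left, inner_sub_left, Complex.add_re, Complex.sub_re]
        ring
      rw [this]
      nlinarith [sq_nonneg ‖b.lm (star ((1 - v * star v) * v)) η‖]
    rcases le_total (‖C + D‖ ^ 2) (‖C - D‖ ^ 2) with h | h
    · obtain ⟨k1, k2, k3⟩ := hd (-Y) (by rwa [norm_neg]) y₁.neg (by rw [star_neg]; exact y₂.neg)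
      refine ⟨_, k1, k2, k3, ?_⟩
      rw [f2]
      linarith
    · obtain ⟨k1, k2, k3⟩ := hd Y hY y₁ y₂
      refine ⟨_, k1, k2, k3, ?_⟩
      rw [f1]
      linarith

end Bim
end AUE

namespace AUE
namespace Bim
section
variable {A E : Type*} [CStarAlgebra A] [NormedAddCommGroup E] [InnerProductSpace ℂ E]
    [CompleteSpace E] (b : Bim A E) [PartialOrder A] [StarOrderedRing A]

/-- A normalized system relating `ξ` and `η`. -/
def Sys (ξ η : E) (τ : ℝ) : Prop := ∃ (ι : Type) (_ : Fintype ι) (a : ι → A),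
  b.Fam a ξ η (τ ^ 2) ∧ ‖b.rm (1 - ∑ j, star (a j) * a j) ξ‖ ≤ τ

variable {b}
lemma Sys.mono {ξ η : E} {τ τ' : ℝ} (h0 : 0 ≤ τ) (h : τ ≤ τ') (hs : b.Sys ξ η τ) :
    b.Sys ξ η τ' := by
  obtain ⟨ι, _, a, ha, h3⟩ := hs
  exact ⟨ι, _, a, ha.mono (by gcongr), h3.trans h⟩

lemma improve {ξ η : E} {τ τ' ρ β γ : ℝ} {m : ℕ} {v : A} (hτ : 0 < τ) (hτ' : 0 < τ')
    (hρ : 0 < ρ) (hρ1 : ρ ≤ 1)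
    (hβ : β = ρ ^ 2 / 4) (hm : 2 < m * β) (hγ : γ = (β / (4 * m)) ^ 2)
    (t1 : 7 * τ' ≤ β / (4 * m)) (t2 : 2 * τ' ≤ ρ / 2) (t3 : 7 * τ' ≤ τ / 2)
    (t4 : τ' ≤ (τ / 2) * γ / (20 * 10 ^ m))
    (hξ : ‖ξ‖ = 1) (hη : ‖η‖ = 1) (hs : b.Sys ξ η τ') (hv : ‖v‖ ≤ 1)
    (h₁ : b.Int v ξ η τ') (h₂ : b.Int (star v) η ξ τ') (hmass : ρ ≤ 1 - ‖b.lm (star v) η‖ ^ 2) :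
    ∃ v' : A, ‖v'‖ ≤ 1 ∧ b.Int v' ξ η τ ∧ b.Int (star v') η ξ τ ∧
      ‖b.lm (star v) η‖ ^ 2 + γ ^ 5 / 18432 / 4 ≤ ‖b.lm (star v') η‖ ^ 2 := by
  obtain ⟨ι, _, a, ha, h3⟩ := hs
  have hβ0 : 0 < β := by rw [hβ]; positivity
  have hβ1 : β ≤ 1 := by rw [hβ]; nlinarith
  have hm0 : (0 : ℝ) < m := by
    by_contra h
    push Not at h
    nlinarith
  have hm1 : (1 : ℝ) ≤ m := by
    have : 0 < m := by exact_mod_cast hm0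
    exact_mod_cast this
  have hg0 : 0 < β / (4 * m) := by positivity
  have hg1 : β / (4 * m) ≤ 1 := by rw [div_le_one (by positivity)]; linarith
  have hγ0 : 0 < γ := by rw [hγ]; positivity
  have hγ1 : γ ≤ 1 := by rw [hγ]; nlinarith
  have mc := abs_le.1 (b.mass_compare hv hξ hη h₁ h₂)
  have hβr : β ≤ ‖b.lm (1 - star v * v) ξ‖ ^ 2 := by
    have e : (inner ℂ (b.lm (1 - star v * v) ξ) ξ).re = 1 - ‖b.lm v ξ‖ ^ 2 := by
      rw [lm_sub, inner_sub_left, Complex.sub_re, ← normsq_lm, lm_one, re_inner_self, hξ]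
      norm_num
    have h := re_inner_le (b.lm (1 - star v * v) ξ) ξ
    rw [e, hξ, mul_one] at h
    have : ρ / 2 ≤ ‖b.lm (1 - star v * v) ξ‖ := by linarith [mc.1, mc.2]
    rw [hβ]
    nlinarith
  obtain ⟨I, _, w, hw, hw2⟩ := walk hτ'.le ha hξ hη h3 hv h₁ h₂ hβ0 hβr hm t1
  rw [← hγ] at hw2
  have r0 : 0 ≤ 1 - star v * v := sub_nonneg.2 (star_mul_le_one hv)
  have r1 : 1 - star v * v ≤ 1 := sub_le_self _ (star_mul_self_nonneg v)
  have s0 : 0 ≤ 1 - v * star v := sub_nonneg.2 (mul_star_le_one hv)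
  have s1 : 1 - v * star v ≤ 1 := sub_le_self _ (mul_star_self_nonneg v)
  have hr : ‖1 - star v * v‖ ≤ 1 := (CStarAlgebra.norm_le_one_iff_of_nonneg _ r0).2 r1
  have hs : ‖1 - v * star v‖ ≤ 1 := (CStarAlgebra.norm_le_one_iff_of_nonneg _ s0).2 s1
  have hζ : ‖b.lm (1 - v * star v) η‖ ≤ 1 := hη ▸ b.norm_lm_one hs η
  have hD : 10 ^ m * τ' ^ 2 ≤ ((τ / 2) * γ) ^ 2 / 400 := by
    have hT : (1 : ℝ) ≤ 10 ^ m := one_le_pow₀ (by norm_num)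
    set T : ℝ := 10 ^ m
    have h1 : τ' * (20 * T) ≤ τ / 2 * γ := (le_div_iff₀ (by positivity)).1 t4
    have h2 : (τ' * (20 * T)) ^ 2 ≤ (τ / 2 * γ) ^ 2 := by gcongr
    have h3 : T * τ' ^ 2 ≤ T * τ' ^ 2 * T := le_mul_of_one_le_right (by positivity) hT
    have h4 : (τ' * (20 * T)) ^ 2 = 400 * (T * τ' ^ 2 * T) := by ring
    linarith
  obtain ⟨Y, y0, yg, y1, y2⟩ := b.exists_Y w hw.o1 hw.o2 hζ hr hγ0 hγ1 (half_pos hτ) hw2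
    (hw.s1.trans hD) (hw.s2.trans hD)
  obtain ⟨v', a1, a2, a3, a4⟩ := improve_step hτ'.le (half_pos hτ).le (by positivity) hv y0 h₁ h₂
    y1 y2 yg
  exact ⟨v', a1, a2.mono (by linarith), a3.mono (by linarith), a4⟩
end

universe u v

/-- Systems can be solved up to defect `ρ`. -/
def Good (ρ : ℝ) : Prop := ∀ τ : ℝ, 0 < τ → ∃ δ : ℝ, 0 < δ ∧
  ∀ (A : Type u) (E : Type v) [CStarAlgebra A] [NormedAddCommGroup E] [InnerProductSpace ℂ E]
    [CompleteSpace E] [PartialOrder A] [StarOrderedRing A] (b : Bim A E) (ξ η : E),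
    ‖ξ‖ = 1 → ‖η‖ = 1 → b.Sys ξ η δ →
    ∃ v : A, ‖v‖ ≤ 1 ∧ b.Int v ξ η τ ∧ b.Int (star v) η ξ τ ∧ 1 - ‖b.lm (star v) η‖ ^ 2 ≤ ρ

lemma Good.mono {ρ ρ' : ℝ} (h : Good.{u, v} ρ) (hr : ρ ≤ ρ') : Good.{u, v} ρ' := by
  intro τ hτ
  obtain ⟨δ, hδ, H⟩ := h τ hτ
  refine ⟨δ, hδ, fun A E _ _ _ _ _ _ b ξ η hξ hη hs => ?_⟩
  obtain ⟨w, h1, h2, h3, h4⟩ := H A E b ξ η hξ hη hs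
  exact ⟨w, h1, h2, h3, h4.trans hr⟩

lemma good_one : Good.{u, v} 1 := by
  intro τ hτ
  refine ⟨1, one_pos, fun A E _ _ _ _ _ _ b ξ η hξ hη hs => ⟨0, by simp, ?_, ?_, ?_⟩⟩
  · simp [Int, lm, rm, hτ.le]
  · simp [Int, lm, rm, hτ.le]
  · simp [lm]

lemma good_step {ρ₀ : ℝ} (h0 : 0 < ρ₀) (h1 : ρ₀ ≤ 1) : ∃ c : ℝ, 0 < c ∧
    ∀ ρ, Good.{u, v} ρ → Good.{u, v} (max ρ₀ (ρ - c)) := by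
  obtain ⟨m, hm⟩ := exists_nat_gt (2 / (ρ₀ ^ 2 / 4))
  have hb : 0 < ρ₀ ^ 2 / 4 := by positivity
  have hm' : 2 < m * (ρ₀ ^ 2 / 4) := by rwa [div_lt_iff₀ hb] at hm
  have hm0 : (0 : ℝ) < m := lt_of_le_of_lt (by positivity) hm
  set β := ρ₀ ^ 2 / 4 with hβ
  set γ := (β / (4 * m)) ^ 2 with hγ
  have hγ0 : 0 < γ := by positivity
  refine ⟨γ ^ 5 / 18432 / 4, by positivity, fun ρ hg τ hτ => ?_⟩
  obtain ⟨τ', hτ', t1, t2, t3, t4⟩ : ∃ τ' : ℝ, 0 < τ' ∧ 7 * τ' ≤ β / (4 * m) ∧ 2 * τ' ≤ ρ₀ / 2 ∧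
      7 * τ' ≤ τ / 2 ∧ τ' ≤ (τ / 2) * γ / (20 * 10 ^ m) := by
    have p1 : 0 < β / (4 * m) := by positivity
    have p4 : 0 < (τ / 2) * γ / (20 * 10 ^ m) := by positivity
    refine ⟨min (min (β / (4 * m) / 7) (ρ₀ / 4)) (min (τ / 14) ((τ / 2) * γ / (20 * 10 ^ m))),
      by positivity, ?_, ?_, ?_, ?_⟩
    · have := (min_le_left (min (β / (4 * m) / 7) (ρ₀ / 4)) (min (τ / 14) ((τ / 2) * γ / (20 * 10 ^ m)))).trans (min_le_left _ _)
      linarith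
    · have := (min_le_left (min (β / (4 * m) / 7) (ρ₀ / 4)) (min (τ / 14) ((τ / 2) * γ / (20 * 10 ^ m)))).trans (min_le_right _ _)
      linarith
    · have := (min_le_right (min (β / (4 * m) / 7) (ρ₀ / 4)) (min (τ / 14) ((τ / 2) * γ / (20 * 10 ^ m)))).trans (min_le_left _ _)
      linarith
    · exact (min_le_right _ _).trans (min_le_right _ _)
  obtain ⟨δ, hδ, H⟩ := hg τ' hτ'
  refine ⟨min δ τ', lt_min hδ hτ', fun A E _ _ _ _ _ _ b ξ η hξ hη hs => ?_⟩
  obtain ⟨w, w1, w2, w3, w4⟩ := H A E b ξ η hξ hη (hs.mono (lt_min hδ hτ').le (min_le_left _ _))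
  by_cases hc : 1 - ‖b.lm (star w) η‖ ^ 2 ≤ ρ₀
  · have : τ' ≤ τ := by linarith
    exact ⟨w, w1, w2.mono this, w3.mono this, hc.trans (le_max_left _ _)⟩
  · push Not at hc
    obtain ⟨v', a1, a2, a3, a4⟩ := improve hτ hτ' h0 h1 hβ hm' hγ t1 t2 t3 t4 hξ hη
      (hs.mono (lt_min hδ hτ').le (min_le_right _ _)) w1 w2 w3 hc.le
    exact ⟨v', a1, a2, a3, le_max_of_le_right (by linarith)⟩

lemma good_all {ρ₀ : ℝ} (h0 : 0 < ρ₀) (h1 : ρ₀ ≤ 1) : Good.{u, v} ρ₀ := by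
  obtain ⟨c, hc, H⟩ := good_step.{u, v} h0 h1
  have K : ∀ k : ℕ, Good.{u, v} (max ρ₀ (1 - k * c)) := by
    intro k
    induction k with
    | zero => exact good_one.mono (by simp)
    | succ k ih =>
      refine (H _ ih).mono ?_
      refine max_le (le_max_left _ _) ?_
      push_cast
      rcases le_total ρ₀ (1 - k * c) with h | h
      · rw [max_eq_right h]; exact le_max_of_le_right (by linarith)
      · rw [max_eq_left h]; exact le_max_of_le_left (by linarith)
  obtain ⟨k, hk⟩ := exists_nat_gt (1 / c)
  rw [div_lt_iff₀ hc] at hk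
  exact (K k).mono (max_le le_rfl (by linarith))

theorem sys_unitary {ε : ℝ} (hε : 0 < ε) : ∃ δ : ℝ, 0 < δ ∧
  ∀ (A : Type u) (E : Type v) [CStarAlgebra A] [NormedAddCommGroup E] [InnerProductSpace ℂ E]
    [CompleteSpace E] [PartialOrder A] [StarOrderedRing A] (b : Bim A E) (ξ η : E),
    ‖ξ‖ = 1 → ‖η‖ = 1 → b.Sys ξ η δ → ∃ w ∈ unitary A, ‖b.lm w ξ - b.rm w η‖ < ε := by
  obtain ⟨κ, hκ, hκ1, k1, k2⟩ : ∃ κ : ℝ, 0 < κ ∧ κ ≤ 1 ∧ κ ≤ ε / 4 ∧ 28 * κ ≤ (ε / 2) ^ 2 := by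
    refine ⟨min (min 1 (ε / 4)) (ε ^ 2 / 112), by positivity, ?_, ?_, ?_⟩
    · exact (min_le_left _ _).trans (min_le_left _ _)
    · exact (min_le_left _ _).trans (min_le_right _ _)
    · have := min_le_right (min 1 (ε / 4)) (ε ^ 2 / 112)
      linarith
  obtain ⟨δ, hδ, H⟩ := good_all.{u, v} hκ hκ1 κ hκ
  refine ⟨δ, hδ, fun A E _ _ _ _ _ _ b ξ η hξ hη hs => ?_⟩
  obtain ⟨v, h1, h2, h3, h4⟩ := H A E b ξ η hξ hη hs
  obtain ⟨w, hw, S, S0, S1, S2⟩ := b.final_step hκ hκ1 h1 hξ hη h2 h3 h4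
  refine ⟨w, hw, lt_of_le_of_lt S2 ?_⟩
  have : S ≤ ε / 2 := abs_le_of_sq_le_sq' (S1.trans k2) (by positivity) |>.2
  linarith

end Bim
end AUE

namespace AUE
namespace Bim
variable {A E : Type*} [CStarAlgebra A] [NormedAddCommGroup E] [InnerProductSpace ℂ E]
    [CompleteSpace E] (b : Bim A E) [PartialOrder A] [StarOrderedRing A]

/-- Truncation of a positive element. -/
structure Tr (h f : A) : Prop where
  sa : star f = f
  n1 : ‖f‖ ≤ 1
  n2 : ‖1 - f‖ ≤ 1
  c1 : f * h * f ≤ 1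
  c2 : (1 - f) * (1 - f) ≤ (1 - h) * (1 - h)
  c3 : (1 - f) * h * (1 - f) ≤ (1 - h) * (1 - h)

lemma exists_Tr {h : A} (h0 : 0 ≤ h) : ∃ f : A, Tr h f := by
  have hs : IsSelfAdjoint h := IsSelfAdjoint.of_nonneg h0
  set F : ℝ → ℝ := fun t => (Real.sqrt (max 1 t))⁻¹ with hF
  have hpos : ∀ t, 1 ≤ Real.sqrt (max 1 t) := fun t => by
    rw [Real.one_le_sqrt]; exact le_max_left _ _
  have hFc : Continuous F := by
    refine Continuous.inv₀ (by fun_prop) fun t => ?_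
    have := hpos t; positivity
  have F0 : ∀ t, 0 ≤ F t := fun t => by positivity
  have F1 : ∀ t, F t ≤ 1 := fun t => inv_le_one_of_one_le₀ (hpos t)
  have Fs : ∀ t, F t ^ 2 * max 1 t = 1 := fun t => by
    have h1 : 0 < max 1 t := lt_of_lt_of_le one_pos (le_max_left _ _)
    rw [hF]; simp only [inv_pow]
    rw [Real.sq_sqrt h1.le]; field_simp
  set f : A := cfc F h with hf
  have hid : h = cfc (fun t : ℝ => t) h := (cfc_id' ℝ h).symm
  have hone : (1 : A) = cfc (fun _ : ℝ => (1 : ℝ)) h := (cfc_const_one ℝ h).symm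
  have conj : ∀ G : ℝ → ℝ, Continuous G →
      cfc G h * h * cfc G h = cfc (fun t => G t * t * G t) h := by
    intro G hG
    rw [cfc_mul _ G h (by fun_prop) (by fun_prop), cfc_mul G (fun t => t) h (by fun_prop)
      (by fun_prop), ← hid]
  have e1 : 1 - f = cfc (fun t => 1 - F t) h := by
    rw [cfc_sub (fun _ => (1:ℝ)) F h (by fun_prop) hFc.continuousOn, ← hone]
  have e2 : 1 - h = cfc (fun t : ℝ => 1 - t) h := by
    rw [cfc_sub (fun _ => (1:ℝ)) (fun t => t) h (by fun_prop) (by fun_prop), ← hone, ← hid]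
  have e3 : (1 - h) * (1 - h) = cfc (fun t : ℝ => (1 - t) * (1 - t)) h := by
    rw [e2, ← cfc_mul _ _ h (by fun_prop) (by fun_prop)]
  have key : ∀ t : ℝ, 0 ≤ t → (1 - F t) ^ 2 * max 1 t ≤ (1 - t) * (1 - t) := by
    intro t ht
    rcases le_total t 1 with h1 | h1
    · have : F t = 1 := by simp [hF, max_eq_left h1]
      rw [this]; nlinarith [mul_self_nonneg (1 - t)]
    · have h2 := Fs t
      rw [max_eq_right h1] at h2 ⊢
      have h3 := F0 t
      have h4 := F1 t
      have h5 : t ≥ t * F t := by nlinarith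
      have h6 : t * F t ≥ 1 := by nlinarith
      have h7 : 0 ≤ t * (1 - F t) := by nlinarith
      -- `(1-F)^2 t = t (1-F) (1-F)`, and `t (1 - F) ≤ t - 1`
      have h8 : t * (1 - F t) ≤ t - 1 := by linarith
      have h9 : 1 - F t ≤ t - 1 := by nlinarith
      calc (1 - F t) ^ 2 * t = (t * (1 - F t)) * (1 - F t) := by ring
        _ ≤ (t - 1) * (t - 1) := mul_le_mul h8 h9 (by linarith) (by linarith)
        _ = _ := by ring
  have sp : ∀ t ∈ spectrum ℝ h, 0 ≤ t := fun t ht => spectrum_nonneg_of_nonneg h0 ht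
  refine ⟨f, ⟨?_, ?_, ?_, ?_, ?_, ?_⟩⟩
  · exact (cfc_predicate F h : IsSelfAdjoint f).star_eq
  · refine norm_cfc_le zero_le_one fun t _ => ?_
    rw [Real.norm_of_nonneg (F0 t)]; exact F1 t
  · rw [e1]
    refine norm_cfc_le zero_le_one fun t _ => ?_
    rw [Real.norm_of_nonneg (by linarith [F1 t])]; linarith [F0 t]
  · have : f * h * f = cfc (fun t => F t * t * F t) h := conj F hFc
    rw [this]
    refine cfc_le_one _ _ fun t ht => ?_
    have := Fs t
    have := le_max_right 1 t
    nlinarith [sq_nonneg (F t)]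
  · rw [e3, e1, ← cfc_mul _ _ h (by fun_prop) (by fun_prop)]
    refine cfc_mono (fun t ht => ?_) (by fun_prop) (by fun_prop)
    have := key t (sp t ht)
    have := le_max_left 1 t
    nlinarith [sq_nonneg (1 - F t)]
  · have : (1 - f) * h * (1 - f) = cfc (fun t => (1 - F t) * t * (1 - F t)) h := by
      rw [e1]; exact conj (fun t => 1 - F t) (by fun_prop)
    rw [this, e3]
    refine cfc_mono (fun t ht => ?_) (by fun_prop) (by fun_prop)
    have := key t (sp t ht)
    have := le_max_right 1 t
    nlinarith [sq_nonneg (1 - F t)]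

lemma re_lm_le (x : A) {ζ : E} (hζ : ‖ζ‖ = 1) {y : A} {e : ℝ} (hs : star y = y) (h : x ≤ y * y)
    (hy : ‖b.lm y ζ‖ ≤ e) : (inner ℂ (b.lm x ζ) ζ).re ≤ e ^ 2 := by
  have h1 := b.re_lm_mono h ζ
  have h2 := b.normsq_lm y ζ
  rw [hs] at h2
  rw [← h2] at h1
  nlinarith [norm_nonneg (b.lm y ζ)]
lemma re_rm_le (x : A) {ζ : E} (hζ : ‖ζ‖ = 1) {y : A} {e : ℝ} (hs : star y = y) (h : x ≤ y * y)
    (hy : ‖b.rm y ζ‖ ≤ e) : (inner ℂ (b.rm x ζ) ζ).re ≤ e ^ 2 := by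
  have h1 := b.re_rm_mono h ζ
  have h2 := b.normsq_rm y ζ
  rw [hs] at h2
  rw [← h2] at h1
  nlinarith [norm_nonneg (b.rm y ζ)]

variable {ι : Type} [Fintype ι]

lemma half_l {a : ι → A} {ξ η : E} {f g : A} {T : ℝ} (hξ : ‖ξ‖ = 1) (hη : ‖η‖ = 1)
    (hf : Tr (∑ j, star (a j) * a j) f) (hg : Tr (∑ j, a j * star (a j)) g)
    (hT : 0 ≤ T) (hT1 : T ≤ 1)
    (h1 : ‖b.lm (1 - ∑ j, star (a j) * a j) ξ‖ ≤ T ^ 2)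
    (h2 : ‖b.lm (1 - ∑ j, a j * star (a j)) η‖ ≤ T ^ 2)
    (h3 : ‖b.rm (1 - ∑ j, a j * star (a j)) η‖ ≤ T ^ 2)
    (hd : ∑ j, ‖b.lm (a j) ξ - b.rm (a j) η‖ ^ 2 ≤ T ^ 2) :
    N (fun j => b.lm (a j) ξ - b.lm (g * a j * f) ξ) ≤ 4 * T := by
  have s1 : star (1 - ∑ j, star (a j) * a j) = 1 - ∑ j, star (a j) * a j := by simp
  have s2 : star (1 - ∑ j, a j * star (a j)) = 1 - ∑ j, a j * star (a j) := by simp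
  have sf : star (1 - f) = 1 - f := by simp [hf.sa]
  have sg : star (1 - g) = 1 - g := by simp [hg.sa]
  -- first piece
  have p1 : N (fun j => b.lm g (b.lm (a j) (b.lm (1 - f) ξ))) ≤ T := by
    refine (N_mono (g := fun j => b.lm (a j) (b.lm (1 - f) ξ))
      fun j => b.norm_lm_one hg.n1 _).trans (N_le_of_sq hT ?_)
    rw [b.sum_lm_eq, inner_lm]
    have e : (inner ℂ (b.lm (1 - f) ξ) (b.lm (star (∑ j, star (a j) * a j)) (b.lm (1 - f) ξ))).re
        = (inner ℂ (b.lm ((1 - f) * (∑ j, star (a j) * a j) * (1 - f)) ξ) ξ).re := by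
      rw [mul_assoc, lm_mul b (1 - f), inner_lm b (1 - f), sf, inner_lm, sf, lm_mul]
      rw [← inner_conj_symm, Complex.conj_re]
      rw [inner_lm, sf]
      simp
    rw [e]
    refine (b.re_lm_le _ hξ s1 hf.c3 h1).trans ?_
    have : T ^ 2 ≤ T := by nlinarith
    nlinarith [sq_nonneg T]
  have p2 : N (fun j => b.lm (1 - g) (b.rm (a j) η)) ≤ 2 * T := by
    refine N_le_of_sq (by linarith) ?_
    simp only [b.comm]
    rw [b.sum_rm_eq]
    set ζ := b.lm (1 - g) η with hζ
    have c : (inner ℂ ζ ζ).re ≤ (T ^ 2) ^ 2 := by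
      have := b.re_lm_le ((1 - g) * (1 - g)) hη s2 hg.c2 h2
      rwa [lm_mul, inner_lm, sg] at this
    have d : (inner ℂ (b.rm (1 - ∑ j, a j * star (a j)) ζ) ζ).re ≥ - T ^ 2 := by
      have q1 : ‖ζ‖ ≤ 1 := hη ▸ b.norm_lm_one hg.n2 η
      have q2 : ‖b.rm (1 - ∑ j, a j * star (a j)) ζ‖ ≤ T ^ 2 := by
        rw [hζ, ← b.comm]; exact (b.norm_lm_one hg.n2 _).trans h3
      have q3 := norm_inner_le_norm (𝕜 := ℂ) (b.rm (1 - ∑ j, a j * star (a j)) ζ) ζ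
      have q4 := Complex.abs_re_le_norm (inner ℂ (b.rm (1 - ∑ j, a j * star (a j)) ζ) ζ)
      have q5 := abs_le.1 (q4.trans q3)
      have : ‖b.rm (1 - ∑ j, a j * star (a j)) ζ‖ * ‖ζ‖ ≤ T ^ 2 * 1 := by gcongr
      linarith [q5.1]
    rw [rm_sub, rm_one, inner_sub_left, Complex.sub_re] at d
    have : (T ^ 2) ^ 2 ≤ T ^ 2 := by
      have : T ^ 2 ≤ 1 := by nlinarith
      nlinarith [sq_nonneg T]
    nlinarith [sq_nonneg T]
  have p3 : N (fun j => b.lm (1 - g) (b.lm (a j) ξ)) ≤ 3 * T := by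
    refine (N_tri _ (fun j => b.lm (1 - g) (b.rm (a j) η))).trans ?_
    have : N (fun j => b.lm (1 - g) (b.lm (a j) ξ) - b.lm (1 - g) (b.rm (a j) η)) ≤ T := by
      refine (N_mono (g := fun j => b.lm (a j) ξ - b.rm (a j) η) fun j => ?_).trans
        (N_le_of_sq hT hd)
      rw [← map_sub]; exact b.norm_lm_one hg.n2 _
    linarith
  have e : (fun j => b.lm (a j) ξ - b.lm (g * a j * f) ξ) = fun j =>
      b.lm (1 - g) (b.lm (a j) ξ) + b.lm g (b.lm (a j) (b.lm (1 - f) ξ)) := by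
    funext j
    simp only [lm_mul, lm_sub, lm_one, map_sub]
    abel
  rw [e]
  refine (N_add_le _ _).trans (by linarith)

lemma half_r {a : ι → A} {ξ η : E} {f g : A} {T : ℝ} (hξ : ‖ξ‖ = 1) (hη : ‖η‖ = 1)
    (hf : Tr (∑ j, star (a j) * a j) f) (hg : Tr (∑ j, a j * star (a j)) g)
    (hT : 0 ≤ T) (hT1 : T ≤ 1)
    (h1 : ‖b.rm (1 - ∑ j, a j * star (a j)) η‖ ≤ T ^ 2)
    (h2 : ‖b.rm (1 - ∑ j, star (a j) * a j) ξ‖ ≤ T ^ 2)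
    (h3 : ‖b.lm (1 - ∑ j, star (a j) * a j) ξ‖ ≤ T ^ 2)
    (hd : ∑ j, ‖b.lm (a j) ξ - b.rm (a j) η‖ ^ 2 ≤ T ^ 2) :
    N (fun j => b.rm (a j) η - b.rm (g * a j * f) η) ≤ 4 * T := by
  have s1 : star (1 - ∑ j, star (a j) * a j) = 1 - ∑ j, star (a j) * a j := by simp
  have s2 : star (1 - ∑ j, a j * star (a j)) = 1 - ∑ j, a j * star (a j) := by simp
  have sf : star (1 - f) = 1 - f := by simp [hf.sa]
  have sg : star (1 - g) = 1 - g := by simp [hg.sa]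
  have p1 : N (fun j => b.rm f (b.rm (a j) (b.rm (1 - g) η))) ≤ T := by
    refine (N_mono (g := fun j => b.rm (a j) (b.rm (1 - g) η))
      fun j => b.norm_rm_one hf.n1 _).trans (N_le_of_sq hT ?_)
    rw [b.sum_rm_eq]
    have e : (inner ℂ (b.rm (∑ j, a j * star (a j)) (b.rm (1 - g) η)) (b.rm (1 - g) η)).re
        = (inner ℂ (b.rm ((1 - g) * (∑ j, a j * star (a j)) * (1 - g)) η) η).re := by
      rw [rm_mul, rm_mul, inner_rm b (1 - g) (b.rm _ _), sg]
    rw [e]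
    refine (b.re_rm_le _ hη s2 hg.c3 h1).trans ?_
    have : T ^ 2 ≤ T := by nlinarith
    nlinarith [sq_nonneg T]
  have p2 : N (fun j => b.rm (1 - f) (b.lm (a j) ξ)) ≤ 2 * T := by
    refine N_le_of_sq (by linarith) ?_
    simp only [← b.comm]
    rw [b.sum_lm_eq]
    set ζ := b.rm (1 - f) ξ with hζ
    have c : (inner ℂ ζ ζ).re ≤ (T ^ 2) ^ 2 := by
      have := b.re_rm_le ((1 - f) * (1 - f)) hξ s1 hf.c2 h2
      rwa [rm_mul, inner_rm, sf] at this
    have d : (inner ℂ (b.lm (1 - ∑ j, star (a j) * a j) ζ) ζ).re ≥ - T ^ 2 := by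
      have q1 : ‖ζ‖ ≤ 1 := hξ ▸ b.norm_rm_one hf.n2 ξ
      have q2 : ‖b.lm (1 - ∑ j, star (a j) * a j) ζ‖ ≤ T ^ 2 := by
        rw [hζ, b.comm]; exact (b.norm_rm_one hf.n2 _).trans h3
      have q3 := norm_inner_le_norm (𝕜 := ℂ) (b.lm (1 - ∑ j, star (a j) * a j) ζ) ζ
      have q4 := Complex.abs_re_le_norm (inner ℂ (b.lm (1 - ∑ j, star (a j) * a j) ζ) ζ)
      have q5 := abs_le.1 (q4.trans q3)
      have : ‖b.lm (1 - ∑ j, star (a j) * a j) ζ‖ * ‖ζ‖ ≤ T ^ 2 * 1 := by gcongr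
      linarith [q5.1]
    rw [lm_sub, lm_one, inner_sub_left, Complex.sub_re] at d
    have : (T ^ 2) ^ 2 ≤ T ^ 2 := by
      have : T ^ 2 ≤ 1 := by nlinarith
      nlinarith [sq_nonneg T]
    nlinarith [sq_nonneg T]
  have p3 : N (fun j => b.rm (1 - f) (b.rm (a j) η)) ≤ 3 * T := by
    refine (N_tri _ (fun j => b.rm (1 - f) (b.lm (a j) ξ))).trans ?_
    have : N (fun j => b.rm (1 - f) (b.rm (a j) η) - b.rm (1 - f) (b.lm (a j) ξ)) ≤ T := by
      refine (N_mono (g := fun j => b.lm (a j) ξ - b.rm (a j) η) fun j => ?_).trans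
        (N_le_of_sq hT hd)
      rw [← map_sub, norm_sub_rev (b.lm _ _)]; exact b.norm_rm_one hf.n2 _
    linarith
  have e : (fun j => b.rm (a j) η - b.rm (g * a j * f) η) = fun j =>
      b.rm (1 - f) (b.rm (a j) η) + b.rm f (b.rm (a j) (b.rm (1 - g) η)) := by
    funext j
    simp only [rm_mul, rm_sub, rm_one, map_sub]
    abel
  rw [e]
  refine (N_add_le _ _).trans (by linarith)

lemma one_sub_le {x : ℝ} {T : ℝ} (hx : 0 ≤ x) (hT : 0 ≤ T) (hT1 : T ≤ 1) (h : 1 - T ^ 2 ≤ x ^ 2) :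
    1 - T ≤ x := by
  nlinarith

/-- Normalization. -/
lemma normalize {a : ι → A} {ξ η : E} {T τ : ℝ} (hξ : ‖ξ‖ = 1) (hη : ‖η‖ = 1)
    (hT : 0 ≤ T) (hT1 : T ≤ 1 / 5) (hτ : 0 ≤ τ) (hTτ : 101 * T ≤ τ ^ 2)
    (h1 : ‖b.lm (1 - ∑ j, star (a j) * a j) ξ‖ ≤ T ^ 2)
    (h2 : ‖b.rm (1 - ∑ j, star (a j) * a j) ξ‖ ≤ T ^ 2)
    (h3 : ‖b.lm (1 - ∑ j, a j * star (a j)) η‖ ≤ T ^ 2)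
    (h4 : ‖b.rm (1 - ∑ j, a j * star (a j)) η‖ ≤ T ^ 2)
    (hd : ∑ j, ‖b.lm (a j) ξ - b.rm (a j) η‖ ^ 2 ≤ T ^ 2) : b.Sys ξ η τ := by
  obtain ⟨f, hf⟩ := exists_Tr (h := ∑ j, star (a j) * a j)
    (Finset.sum_nonneg fun j _ => star_mul_self_nonneg _)
  obtain ⟨g, hg⟩ := exists_Tr (h := ∑ j, a j * star (a j))
    (Finset.sum_nonneg fun j _ => mul_star_self_nonneg _)
  have HP := b.half_l hξ hη hf hg hT (by linarith) h1 h3 h4 hd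
  have HQ := b.half_r hξ hη hf hg hT (by linarith) h4 h2 h1 hd
  have o1 : ∑ j, star (g * a j * f) * (g * a j * f) ≤ 1 := by
    calc ∑ j, star (g * a j * f) * (g * a j * f)
        = star f * (∑ j, star (a j) * (star g * g) * a j) * f := by
          rw [Finset.mul_sum, Finset.sum_mul]
          refine Finset.sum_congr rfl fun j _ => ?_
          simp only [star_mul]; noncomm_ring
      _ ≤ star f * (∑ j, star (a j) * a j) * f := by
          refine star_conj_le (Finset.sum_le_sum fun j _ => ?_) f
          simpa using star_conj_le (star_mul_le_one hg.n1) (a j)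
      _ ≤ 1 := by rw [hf.sa]; exact hf.c1
  have o2 : ∑ j, (g * a j * f) * star (g * a j * f) ≤ 1 := by
    calc ∑ j, (g * a j * f) * star (g * a j * f)
        = star (star g) * (∑ j, star (star (a j)) * (f * star f) * star (a j)) * star g := by
          rw [Finset.mul_sum, Finset.sum_mul]
          refine Finset.sum_congr rfl fun j _ => ?_
          simp only [star_mul, star_star]; noncomm_ring
      _ ≤ star (star g) * (∑ j, a j * star (a j)) * star g := by
          refine star_conj_le (Finset.sum_le_sum fun j _ => ?_) (star g)
          simpa using star_conj_le (mul_star_le_one hf.n1) (star (a j))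
      _ ≤ 1 := by rw [hg.sa, hg.sa]; exact hg.c1
  set a' : ι → A := fun j => g * a j * f with ha'
  have nP : 1 - T ^ 2 ≤ N (fun j => b.lm (a j) ξ) ^ 2 := by
    rw [N_sq, sum_lm_eq]
    have := re_inner_le (b.lm (1 - ∑ j, star (a j) * a j) ξ) ξ
    rw [hξ, mul_one] at this
    have e : (inner ℂ (b.lm (1 - ∑ j, star (a j) * a j) ξ) ξ).re
        = 1 - (inner ℂ (b.lm (∑ j, star (a j) * a j) ξ) ξ).re := by
      rw [lm_sub, lm_one, inner_sub_left, Complex.sub_re, re_inner_self, hξ]; norm_num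
    linarith
  have nQ : 1 - T ^ 2 ≤ N (fun j => b.rm (a j) η) ^ 2 := by
    rw [N_sq, sum_rm_eq]
    have := re_inner_le (b.rm (1 - ∑ j, a j * star (a j)) η) η
    rw [hη, mul_one] at this
    have e : (inner ℂ (b.rm (1 - ∑ j, a j * star (a j)) η) η).re
        = 1 - (inner ℂ (b.rm (∑ j, a j * star (a j)) η) η).re := by
      rw [rm_sub, rm_one, inner_sub_left, Complex.sub_re, re_inner_self, hη]; norm_num
    linarith
  have nP1 := one_sub_le (N_nonneg _) hT (by linarith) nP
  have nQ1 := one_sub_le (N_nonneg _) hT (by linarith) nQ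
  have nP2 : 1 - 5 * T ≤ N (fun j => b.lm (a' j) ξ) := by
    have := N_tri (fun j => b.lm (a j) ξ) (fun j => b.lm (a' j) ξ)
    linarith
  have nQ2 : 1 - 5 * T ≤ N (fun j => b.rm (a' j) η) := by
    have := N_tri (fun j => b.rm (a j) η) (fun j => b.rm (a' j) η)
    linarith
  have D : N (fun j => b.lm (a' j) ξ - b.rm (a' j) η) ≤ 9 * T := by
    have d0 := N_le_of_sq hT hd
    have d1 := N_add_le (fun j => b.lm (a' j) ξ - b.lm (a j) ξ)
      (fun j => b.lm (a j) ξ - b.rm (a j) η)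
    have d2 := N_add_le (fun j => (b.lm (a' j) ξ - b.lm (a j) ξ) + (b.lm (a j) ξ - b.rm (a j) η))
      (fun j => b.rm (a j) η - b.rm (a' j) η)
    have d3 := N_sub_comm (fun j => b.lm (a' j) ξ) (fun j => b.lm (a j) ξ)
    simp only [sub_add_sub_cancel] at d1 d2
    linarith
  have D2 : ∑ j, ‖b.lm (a' j) ξ - b.rm (a' j) η‖ ^ 2 ≤ 81 * T ^ 2 := by
    rw [← N_sq]
    nlinarith [N_nonneg (fun j => b.lm (a' j) ξ - b.rm (a' j) η)]
  set z : ℝ := ∑ j, (inner ℂ (b.rm (a' j) η) (b.lm (a' j) ξ)).re with hz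
  have ex : ∀ x y : E, ‖x - y‖ ^ 2 = ‖x‖ ^ 2 + ‖y‖ ^ 2 - 2 * (inner ℂ y x).re := by
    intro x y
    rw [norm_sub_rev, norm_sub_sq (𝕜 := ℂ)]
    simp only [RCLike.re_to_complex]; ring
  have z1 : ∑ j, ‖b.lm (a' j) ξ - b.rm (a' j) η‖ ^ 2
      = N (fun j => b.lm (a' j) ξ) ^ 2 + N (fun j => b.rm (a' j) η) ^ 2 - 2 * z := by
    rw [N_sq, N_sq, hz, Finset.mul_sum, ← Finset.sum_add_distrib, ← Finset.sum_sub_distrib]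
    exact Finset.sum_congr rfl fun j _ => ex _ _
  have z2 : ∑ j, ‖b.lm (star (a' j)) η - b.rm (star (a' j)) ξ‖ ^ 2
      = ∑ j, ‖b.lm (star (a' j)) η‖ ^ 2 + ∑ j, ‖b.rm (star (a' j)) ξ‖ ^ 2 - 2 * z := by
    rw [hz, Finset.mul_sum, ← Finset.sum_add_distrib, ← Finset.sum_sub_distrib]
    refine Finset.sum_congr rfl fun j _ => ?_
    rw [norm_sub_rev, ex, inner_swap]; ring
  have m1 := b.sum_lm_star_le o2 η
  have m2 := b.sum_rm_star_le o1 ξ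
  rw [hη] at m1
  rw [hξ] at m2
  have zb : 2 - 2 * z ≤ 101 * T := by
    have q1 : (1 - 5 * T) ^ 2 ≤ N (fun j => b.lm (a' j) ξ) ^ 2 := by
      gcongr; linarith
    have q2 : (1 - 5 * T) ^ 2 ≤ N (fun j => b.rm (a' j) η) ^ 2 := by
      gcongr; linarith
    nlinarith
  refine ⟨ι, inferInstance, a', ⟨o1, o2, ?_, ?_⟩, ?_⟩
  · nlinarith
  · rw [z2]
    have m1' : ∑ j, ‖b.lm (star (a' j)) η‖ ^ 2 ≤ 1 := m1.trans_eq (by norm_num)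
    have m2' : ∑ j, ‖b.rm (star (a' j)) ξ‖ ^ 2 ≤ 1 := m2.trans_eq (by norm_num)
    linarith
  · have m1' : ∑ j, ‖b.lm (star (a' j)) η‖ ^ 2 ≤ 1 := m1.trans_eq (by norm_num)
    have nn : 0 ≤ ∑ j, ‖b.lm (star (a' j)) η - b.rm (star (a' j)) ξ‖ ^ 2 :=
      Finset.sum_nonneg fun _ _ => sq_nonneg _
    set B := ∑ j, star (a' j) * a' j with hB
    have hB0 : 0 ≤ B := Finset.sum_nonneg fun j _ => star_mul_self_nonneg _
    have sB : star (1 - B) = 1 - B := by simp [hB]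
    have hle : (1 - B) * (1 - B) ≤ 1 - B := by
      have r0 : 0 ≤ 1 - B := sub_nonneg.2 o1
      have k1 := star_left_conjugate_nonneg r0 B
      have k2 := star_left_conjugate_nonneg hB0 (1 - B)
      rw [sB] at k2
      have sB' : star B = B := (IsSelfAdjoint.of_nonneg hB0).star_eq
      rw [sB'] at k1
      have : 1 - B - (1 - B) * (1 - B) = B * (1 - B) * B + (1 - B) * B * (1 - B) := by
        noncomm_ring
      rw [← sub_nonneg, this]
      exact add_nonneg k1 k2
    have w1 := b.normsq_rm (1 - B) ξ
    rw [sB] at w1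
    have w2 := b.re_rm_mono hle ξ
    have w3 : (inner ℂ (b.rm (1 - B) ξ) ξ).re = 1 - ∑ j, ‖b.rm (star (a' j)) ξ‖ ^ 2 := by
      rw [sum_rm_eq, rm_sub, rm_one, inner_sub_left, Complex.sub_re, re_inner_self, hξ]
      simp [hB]
    refine abs_le_of_sq_le_sq' ?_ hτ |>.2
    linarith

end Bim
end AUE

namespace AUE

section diag
variable {E : Type*} [NormedAddCommGroup E] [InnerProductSpace ℂ E] [CompleteSpace E] (n : ℕ)

/-- The diagonal operator on `E^n`. -/
def dgFun (T : E →L[ℂ] E) :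
    PiLp 2 (fun _ : Fin n => E) →L[ℂ] PiLp 2 (fun _ : Fin n => E) where
  toFun x := WithLp.toLp 2 (fun k => T (x k))
  map_add' x y := by ext k; simp
  map_smul' c x := by ext k; simp
  cont := by fun_prop

lemma dgFun_apply (T : E →L[ℂ] E) (x : PiLp 2 (fun _ : Fin n => E)) (k : Fin n) :
    dgFun n T x k = T (x k) := rfl

/-- The diagonal representation. -/
def dg : (E →L[ℂ] E) →⋆ₐ[ℂ]
    (PiLp 2 (fun _ : Fin n => E) →L[ℂ] PiLp 2 (fun _ : Fin n => E)) where
  toFun := dgFun n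
  map_one' := by ext x k; simp [dgFun_apply]
  map_mul' S T := by ext x k; simp [dgFun_apply]
  map_zero' := by ext x k; simp [dgFun_apply]
  map_add' S T := by ext x k; simp [dgFun_apply]
  commutes' c := by ext x k; simp [dgFun_apply, Algebra.algebraMap_eq_smul_one]
  map_star' T := by
    rw [ContinuousLinearMap.star_eq_adjoint, ContinuousLinearMap.star_eq_adjoint,
      ContinuousLinearMap.eq_adjoint_iff]
    intro x y
    simp [PiLp.inner_apply, dgFun_apply, ContinuousLinearMap.adjoint_inner_left]

end diag

lemma vn_isClosed {K : Type*} [NormedAddCommGroup K] [InnerProductSpace ℂ K] [CompleteSpace K]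
    (M : VonNeumannAlgebra K) : IsClosed (M : Set (K →L[ℂ] K)) := by
  rw [← M.centralizer_centralizer]
  exact Set.isClosed_centralizer _

/-- The C*-algebra underlying a von Neumann algebra. -/
@[reducible] def vnC {K : Type*} [NormedAddCommGroup K] [InnerProductSpace ℂ K] [CompleteSpace K]
    (M : VonNeumannAlgebra K) : CStarAlgebra M :=
  @StarSubalgebra.cstarAlgebra _ _ _ _ _ _ _ M (vn_isClosed M)

/-- The diagonal bimodule. -/
def diagBim {K : Type*} [NormedAddCommGroup K] [InnerProductSpace ℂ K] [CompleteSpace K]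
    {M : VonNeumannAlgebra K} {E : Type*} [NormedAddCommGroup E] [InnerProductSpace ℂ E]
    [CompleteSpace E] (b : HilbertBimodule M E) (n : ℕ) :
    @Bim M (PiLp 2 (fun _ : Fin n => E)) (vnC M) _ _ _ :=
  letI := vnC M
  { l := (dg n).comp b.L
    r := (dg n).comp b.R
    comm' := by
      intro x y ξ
      ext k
      exact b.commutes x y (ξ k) }

lemma diagBim_lm {K : Type*} [NormedAddCommGroup K] [InnerProductSpace ℂ K] [CompleteSpace K]
    {M : VonNeumannAlgebra K} {E : Type*} [NormedAddCommGroup E] [InnerProductSpace ℂ E]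
    [CompleteSpace E] (b : HilbertBimodule M E) (n : ℕ) (x : M)
    (ξ : PiLp 2 (fun _ : Fin n => E)) (k : Fin n) :
    @Bim.lm M _ (vnC M) _ _ _ (diagBim b n) x ξ k = b.lsmul x (ξ k) := rfl
lemma diagBim_rm {K : Type*} [NormedAddCommGroup K] [InnerProductSpace ℂ K] [CompleteSpace K]
    {M : VonNeumannAlgebra K} {E : Type*} [NormedAddCommGroup E] [InnerProductSpace ℂ E]
    [CompleteSpace E] (b : HilbertBimodule M E) (n : ℕ) (x : M)
    (ξ : PiLp 2 (fun _ : Fin n => E)) (k : Fin n) :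
    @Bim.rm M _ (vnC M) _ _ _ (diagBim b n) x ξ k = b.rsmul (ξ k) x := rfl

/-- The normalized amplification of a tuple. -/
def amp {E : Type*} [NormedAddCommGroup E] [InnerProductSpace ℂ E] {n : ℕ} (ξ : Fin n → E) :
    PiLp 2 (fun _ : Fin n => E) := WithLp.toLp 2 (fun k => (((Real.sqrt n)⁻¹ : ℝ) : ℂ) • ξ k)

lemma normsq_pi {E : Type*} [NormedAddCommGroup E] [InnerProductSpace ℂ E] {n : ℕ}
    (x : PiLp 2 (fun _ : Fin n => E)) : ‖x‖ ^ 2 = ∑ k, ‖x k‖ ^ 2 := by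
  rw [PiLp.norm_eq_of_L2, Real.sq_sqrt (Finset.sum_nonneg fun _ _ => sq_nonneg _)]

lemma normsq_amp {E : Type*} [NormedAddCommGroup E] [InnerProductSpace ℂ E] {n : ℕ}
    (hn : 0 < n) (ξ : Fin n → E) {x : PiLp 2 (fun _ : Fin n => E)}
    (hx : ∀ k, x k = (((Real.sqrt n)⁻¹ : ℝ) : ℂ) • ξ k) : ‖x‖ ^ 2 = (∑ k, ‖ξ k‖ ^ 2) / n := by
  rw [normsq_pi, Finset.sum_div]
  refine Finset.sum_congr rfl fun k _ => ?_
  rw [hx, norm_smul, Complex.norm_real, mul_pow, Real.norm_of_nonneg (by positivity), inv_pow,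
    Real.sq_sqrt (by positivity)]
  field_simp

lemma norm_amp_one {E : Type*} [NormedAddCommGroup E] [InnerProductSpace ℂ E] {n : ℕ}
    (hn : 0 < n) (ξ : Fin n → E) (h : ∀ k, ‖ξ k‖ = 1) : ‖amp ξ‖ = 1 := by
  have h0 : (0 : ℝ) < n := by exact_mod_cast hn
  have h1 := normsq_amp hn ξ (x := amp ξ) (fun k => rfl)
  simp only [h] at h1
  have : ‖amp ξ‖ ^ 2 = 1 := by rw [h1]; simp [h0.ne']
  exact (pow_eq_one_iff_of_nonneg (norm_nonneg _) two_ne_zero).1 this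

lemma norm_amp_le {E : Type*} [NormedAddCommGroup E] [InnerProductSpace ℂ E] {n : ℕ}
    (hn : 0 < n) (ξ : Fin n → E) {x : PiLp 2 (fun _ : Fin n => E)}
    (hx : ∀ k, x k = (((Real.sqrt n)⁻¹ : ℝ) : ℂ) • ξ k) {c : ℝ} (hc : 0 ≤ c)
    (h : ∀ k, ‖ξ k‖ ≤ c) : ‖x‖ ≤ c := by
  have h0 : (0 : ℝ) < n := by exact_mod_cast hn
  refine abs_le_of_sq_le_sq' ?_ hc |>.2
  rw [normsq_amp hn ξ hx, div_le_iff₀ h0]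
  calc ∑ k, ‖ξ k‖ ^ 2 ≤ ∑ k : Fin n, c ^ 2 := Finset.sum_le_sum fun k _ => by
        gcongr; exact h k
    _ = c ^ 2 * n := by simp [mul_comm]

section
variable {K : Type*} [NormedAddCommGroup K] [InnerProductSpace ℂ K] [CompleteSpace K]
    {M : VonNeumannAlgebra K} {E : Type*} [NormedAddCommGroup E] [InnerProductSpace ℂ E]
    [CompleteSpace E] (b : HilbertBimodule M E) {n : ℕ}

lemma lm_amp (x : M) (ξ : Fin n → E) (k : Fin n) :
    @Bim.lm M _ (vnC M) _ _ _ (diagBim b n) x (amp ξ) k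
      = (((Real.sqrt n)⁻¹ : ℝ) : ℂ) • b.lsmul x (ξ k) := by
  rw [diagBim_lm]; exact map_smul (b.L x) _ _
lemma rm_amp (x : M) (ξ : Fin n → E) (k : Fin n) :
    @Bim.rm M _ (vnC M) _ _ _ (diagBim b n) x (amp ξ) k
      = (((Real.sqrt n)⁻¹ : ℝ) : ℂ) • b.rsmul (ξ k) x := by
  rw [diagBim_rm]; exact map_smul (b.R (MulOpposite.op x)) _ _
lemma diff_amp (x : M) (ξ η : Fin n → E) (k : Fin n) :
    (@Bim.lm M _ (vnC M) _ _ _ (diagBim b n) x (amp ξ)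
      - @Bim.rm M _ (vnC M) _ _ _ (diagBim b n) x (amp η)) k
      = (((Real.sqrt n)⁻¹ : ℝ) : ℂ) • (b.lsmul x (ξ k) - b.rsmul (η k) x) := by
  rw [PiLp.sub_apply, lm_amp, rm_amp, smul_sub]
end

end AUE

end

universe u v

theorem almost_unitary_equivalence (n : ℕ) (ε : ℝ) (hε : 0 < ε) :
    ∃ δ : ℝ, 0 < δ ∧
      ∀ (K : Type u) (_ : NormedAddCommGroup K) (_ : InnerProductSpace ℂ K)
        (_ : CompleteSpace K) (M : VonNeumannAlgebra K)
        (E : Type v) (_ : NormedAddCommGroup E) (_ : InnerProductSpace ℂ E)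
        (_ : CompleteSpace E) (b : HilbertBimodule M E)
        (ξ η : Fin n → E), (∀ k, ‖ξ k‖ = 1) → (∀ k, ‖η k‖ = 1) →
          b.AlmostRelated δ ξ η →
          ∃ u : M, u ∈ unitary M ∧
            ∀ k, ‖b.lsmul u (ξ k) - b.rsmul (η k) u‖ < ε := by
  rcases Nat.eq_zero_or_pos n with rfl | hn
  · exact ⟨1, one_pos, fun K _ _ _ M E _ _ _ b ξ η _ _ _ =>
      ⟨1, one_mem _, fun k => k.elim0⟩⟩
  have h0 : (0 : ℝ) < n := by exact_mod_cast hn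
  have hsn : 0 < Real.sqrt n := Real.sqrt_pos.2 h0
  obtain ⟨τ, hτ, H⟩ := AUE.Bim.sys_unitary.{u, v} (ε := ε / Real.sqrt n) (by positivity)
  obtain ⟨T, hT, hT1, hTτ⟩ : ∃ T : ℝ, 0 < T ∧ T ≤ 1 / 5 ∧ 101 * T ≤ τ ^ 2 := by
    refine ⟨min (1 / 5) (τ ^ 2 / 101), by positivity, min_le_left _ _, ?_⟩
    have := min_le_right (1 / 5) (τ ^ 2 / 101)
    linarith
  refine ⟨T ^ 2, by positivity, fun K _ _ _ M E _ _ _ b ξ η hξ hη hr => ?_⟩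
  obtain ⟨p, a, ha⟩ := hr (T ^ 2) (by positivity)
  letI := AUE.vnC M
  letI := CStarAlgebra.spectralOrder M
  letI := CStarAlgebra.spectralOrderedRing M
  have hξ1 := AUE.norm_amp_one hn ξ hξ
  have hη1 := AUE.norm_amp_one hn η hη
  have hT2 : 0 ≤ T ^ 2 := by positivity
  have sys : (AUE.diagBim b n).Sys (AUE.amp ξ) (AUE.amp η) τ := by
    refine AUE.Bim.normalize (AUE.diagBim b n) (a := a) hξ1 hη1 hT.le hT1 hτ.le hTτ ?_ ?_ ?_ ?_ ?_
    · exact AUE.norm_amp_le hn _ (fun k => AUE.lm_amp b _ ξ k) hT2 fun k => (ha k).1.le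
    · exact AUE.norm_amp_le hn _ (fun k => AUE.rm_amp b _ ξ k) hT2 fun k => (ha k).2.2.1.le
    · exact AUE.norm_amp_le hn _ (fun k => AUE.lm_amp b _ η k) hT2 fun k => (ha k).2.2.2.2.2.1.le
    · exact AUE.norm_amp_le hn _ (fun k => AUE.rm_amp b _ η k) hT2
        fun k => (ha k).2.2.2.2.2.2.2.1.le
    · have e : ∀ j, ‖(AUE.diagBim b n).lm (a j) (AUE.amp ξ) - (AUE.diagBim b n).rm (a j) (AUE.amp η)‖ ^ 2
          = (∑ k, ‖b.lsmul (a j) (ξ k) - b.rsmul (η k) (a j)‖ ^ 2) / n := fun j =>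
        AUE.normsq_amp hn (fun k => b.lsmul (a j) (ξ k) - b.rsmul (η k) (a j))
          (fun k => AUE.diff_amp b (a j) ξ η k)
      simp only [e]
      rw [← Finset.sum_div, Finset.sum_comm, div_le_iff₀ h0]
      calc ∑ k, ∑ j, ‖b.lsmul (a j) (ξ k) - b.rsmul (η k) (a j)‖ ^ 2
          ≤ ∑ k : Fin n, T ^ 2 := Finset.sum_le_sum fun k _ => (ha k).2.2.2.2.2.2.2.2.le
        _ = T ^ 2 * n := by simp [mul_comm]
  obtain ⟨w, hw, hw2⟩ := H M (PiLp 2 (fun _ : Fin n => E)) (AUE.diagBim b n) _ _ hξ1 hη1 sys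
  refine ⟨w, hw, fun k => ?_⟩
  have e := AUE.diff_amp b w ξ η k
  have f := PiLp.norm_apply_le ((AUE.diagBim b n).lm w (AUE.amp ξ) - (AUE.diagBim b n).rm w (AUE.amp η)) k
  have g := lt_of_le_of_lt f hw2
  rw [e, norm_smul, Complex.norm_real, Real.norm_of_nonneg (by positivity), inv_mul_eq_div] at g
  exact (div_lt_div_iff_of_pos_right hsn).1 g
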